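/- arXiv:1607.05892 — 2 statements merged into one kernel-verified Lean document; each statement's English description precedes it below -/
import Mathlib

section
/- Let S be a thick generalized quadrangle and S' a thick full subquadrangle of S that is a geometrical hyperplane of S, with A, E and the canonical projection π : A → E as defined. Then every 2-cover γ : A → E (a cover all of whose point fibers and line fibers have exactly 2 elements) factorizes as γ = α ∘ π for some automorphism α of E. -/
namespace GQpaper

variable {P L : Type}

/-- Two points of a point-line geometry are collinear: they are equal or lie on a
common line. -/
def Collinear (I : P → L → Prop) (x y : P) : Prop :=
  x = y ∨ ∃ l : L, I x l ∧ I y l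

/-- Generalized quadrangle axioms: two distinct points are on at most one common line,
and for every non-incident point-line pair `(x, l)` there is a unique pair `(y, M)`
with `x I M`, `y I M`, `y I l`. -/
def IsGQ (I : P → L → Prop) : Prop :=
  (∀ x y : P, x ≠ y → ∀ M N : L, I x M → I y M → I x N → I y N → M = N) ∧
  (∀ (x : P) (l : L), ¬ I x l → ∃! p : P × L, I x p.2 ∧ I p.1 p.2 ∧ I p.1 l)

/-- Thick: every line has at least 3 points and every point is on at least 3 lines. -/
def Thick (I : P → L → Prop) : Prop :=
  (∀ l : L, ∃ x y z : P, x ≠ y ∧ y ≠ z ∧ x ≠ z ∧ I x l ∧ I y l ∧ I z l) ∧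
  (∀ x : P, ∃ l m n : L, l ≠ m ∧ m ≠ n ∧ l ≠ n ∧ I x l ∧ I x m ∧ I x n)

/-- The induced incidence relation on a subgeometry `(P', L')`. -/
def SubIncid (I : P → L → Prop) (P' : Set P) (L' : Set L) : ↥P' → ↥L' → Prop :=
  fun x l => I x.1 l.1

/-- A subgeometry is full if every point of the ambient geometry incident with one of
its lines belongs to it. -/
def IsFull (I : P → L → Prop) (P' : Set P) (L' : Set L) : Prop :=
  ∀ l ∈ L', ∀ x : P, I x l → x ∈ P'

/-- A geometrical hyperplane: each of its lines contains at least 2 of its points, and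
every line of the ambient geometry either is a line of the subgeometry all of whose
points lie in the subgeometry, or contains exactly one point of the subgeometry. -/
def IsGeomHyperplane (I : P → L → Prop) (P' : Set P) (L' : Set L) : Prop :=
  (∀ l ∈ L', ∃ x y : P, x ≠ y ∧ x ∈ P' ∧ y ∈ P' ∧ I x l ∧ I y l) ∧
  (∀ l : L, (l ∈ L' ∧ ∀ x : P, I x l → x ∈ P') ∨ (l ∉ L' ∧ ∃! x : P, I x l ∧ x ∈ P'))

/-- An ovoid of the subquadrangle `(P', L')`: a set of its points meeting every one of
its lines in exactly one point. -/
def IsOvoid (I : P → L → Prop) (P' : Set P) (L' : Set L) (O : Set P) : Prop :=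
  O ⊆ P' ∧ ∀ l ∈ L', ∃! x : P, x ∈ O ∧ I x l

/-- The ovoid of `S'` subtended by an external point `x`: the points of `P'` collinear
with `x`. -/
def subtendedOvoid (I : P → L → Prop) (P' : Set P) (x : P) : Set P :=
  {y : P | y ∈ P' ∧ Collinear I x y}

/-- The rosette of ovoids determined by a line `l` (not in the subquadrangle): the set
of the ovoids subtended by the external points of `l`. -/
def rosette (I : P → L → Prop) (P' : Set P) (l : L) : Set (Set P) :=
  {O : Set P | ∃ x : P, x ∉ P' ∧ I x l ∧ O = subtendedOvoid I P' x}

/-- Points of the geometry `A = S \ S'`. -/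
abbrev APoint (P' : Set P) : Type := {x : P // x ∉ P'}

/-- Lines of the geometry `A = S \ S'`. -/
abbrev ALine (L' : Set L) : Type := {l : L // l ∉ L'}

/-- Incidence in the geometry `A`. -/
def AIncid (I : P → L → Prop) (P' : Set P) (L' : Set L) :
    APoint P' → ALine L' → Prop :=
  fun x l => I x.1 l.1

/-- Points of the geometry `E`: the subtended ovoids of `S'`. -/
abbrev EPoint (I : P → L → Prop) (P' : Set P) : Type :=
  {O : Set P // ∃ x : P, x ∉ P' ∧ O = subtendedOvoid I P' x}

/-- Lines of the geometry `E`: the rosettes of subtended ovoids of `S'`. -/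
abbrev ELine (I : P → L → Prop) (P' : Set P) (L' : Set L) : Type :=
  {R : Set (Set P) // ∃ l : L, l ∉ L' ∧ R = rosette I P' l}

/-- Incidence in `E`: membership of an ovoid in a rosette. -/
def EIncid (I : P → L → Prop) (P' : Set P) (L' : Set L) :
    EPoint I P' → ELine I P' L' → Prop :=
  fun O R => O.1 ∈ R.1

/-- The canonical projection `π : A → E` on points. -/
def piPoint (I : P → L → Prop) (P' : Set P) : APoint P' → EPoint I P' :=
  fun x => ⟨subtendedOvoid I P' x.1, x.1, x.2, rfl⟩

/-- The canonical projection `π : A → E` on lines. -/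
def piLine (I : P → L → Prop) (P' : Set P) (L' : Set L) : ALine L' → ELine I P' L' :=
  fun l => ⟨rosette I P' l.1, l.1, l.2, rfl⟩

/-- A morphism of point-line geometries: preserves incidence. -/
def IsMorphism {P₁ L₁ P₂ L₂ : Type} (I₁ : P₁ → L₁ → Prop) (I₂ : P₂ → L₂ → Prop)
    (fp : P₁ → P₂) (fl : L₁ → L₂) : Prop :=
  ∀ x l, I₁ x l → I₂ (fp x) (fl l)

/-- A cover: a morphism which is locally bijective, i.e. for every point `x` it induces
a bijection between the lines through `x` and the lines through `fp x`, and dually. -/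
def IsCover {P₁ L₁ P₂ L₂ : Type} (I₁ : P₁ → L₁ → Prop) (I₂ : P₂ → L₂ → Prop)
    (fp : P₁ → P₂) (fl : L₁ → L₂) : Prop :=
  IsMorphism I₁ I₂ fp fl ∧
  (∀ (x : P₁) (m : L₂), I₂ (fp x) m → ∃! l : L₁, I₁ x l ∧ fl l = m) ∧
  (∀ (l : L₁) (y : P₂), I₂ y (fl l) → ∃! x : P₁, I₁ x l ∧ fp x = y)

/-- An isomorphism of point-line geometries: a bijective morphism whose inverse is a
morphism, equivalently a pair of bijections under which incidence corresponds. -/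
def IsIso {P₁ L₁ P₂ L₂ : Type} (I₁ : P₁ → L₁ → Prop) (I₂ : P₂ → L₂ → Prop)
    (fp : P₁ → P₂) (fl : L₁ → L₂) : Prop :=
  Function.Bijective fp ∧ Function.Bijective fl ∧
  ∀ (x : P₁) (l : L₁), I₁ x l ↔ I₂ (fp x) (fl l)

/-- An automorphism of a point-line geometry. -/
def IsAuto (I : P → L → Prop) (fp : P → P) (fl : L → L) : Prop :=
  IsIso I I fp fl

/-- A finite GQ has order `(s, t)` if every line carries `s + 1` points and every point
carries `t + 1` lines. -/
def HasOrder (I : P → L → Prop) (s t : ℕ) : Prop :=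
  (∀ l : L, {x : P | I x l}.ncard = s + 1) ∧
  (∀ x : P, {l : L | I x l}.ncard = t + 1)

/-- Every subtended ovoid of `S'` is subtended by exactly `θ` external points. -/
def AllThetaSubtended (I : P → L → Prop) (P' : Set P) (θ : ℕ) : Prop :=
  ∀ x : P, x ∉ P' →
    {y : P | y ∉ P' ∧ subtendedOvoid I P' y = subtendedOvoid I P' x}.ncard = θ

/-- The perp of a set of points: all points collinear with every point of the set. -/
def perpSet (I : P → L → Prop) (X : Set P) : Set P :=
  {z : P | ∀ y ∈ X, Collinear I z y}

/-- The action of a permutation of the points of `S'` on subsets of `P'`. -/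
def ovMap (P' : Set P) (f : ↥P' → ↥P') (O : Set P) : Set P :=
  {z : P | ∃ y : ↥P', y.1 ∈ O ∧ (f y).1 = z}

/-!
If `x` is not on `l` in the quadrangle `S`, exactly one path of length three joins `x` to `l`. A
2-cover `γ` from `A` therefore allows at most two such paths in `E` from an ovoid to a rosette not
containing it. Two consequences follow by projecting points of `A` onto lines of `A`. First, `E` is
a partial linear space; hence two distinct points in a fiber of `γ` have no common neighbour, which
forces them to subtend the same ovoid. Second, points subtending the same ovoid yield distinct
paths, so at most two points subtend a given ovoid. Thus the fibers of `γ`, which have exactly two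
points, coincide with those of `π`, and `γ` factors through `π` by an automorphism.
-/

/-- The paths of length three from `x` to `l`: the pairs `(y, M)` with `x I M I y I l`. The second
axiom of a generalized quadrangle says that there is exactly one of them when `x` is not on `l`. -/
def pathsTo (I : P → L → Prop) (x : P) (l : L) : Set (P × L) :=
  {p | I x p.2 ∧ I p.1 p.2 ∧ I p.1 l}

/-- A partial linear space: two distinct points are on at most one common line. -/
def IsPartialLinear (I : P → L → Prop) : Prop :=
  ∀ x y : P, x ≠ y → ∀ M N : L, I x M → I y M → I x N → I y N → M = N

section Quadrangle

variable {I : P → L → Prop}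

theorem IsGQ.eq_and_eq_of_notIncid (hGQ : IsGQ I) {x y z : P} {l M N : L} (hxl : ¬ I x l)
    (hxM : I x M) (hyM : I y M) (hyl : I y l) (hxN : I x N) (hzN : I z N) (hzl : I z l) :
    y = z ∧ M = N :=
  Prod.ext_iff.1 <| (hGQ.2 x l hxl).unique (y₁ := (y, M)) (y₂ := (z, N))
    ⟨hxM, hyM, hyl⟩ ⟨hxN, hzN, hzl⟩

theorem IsGQ.isPartialLinear (hGQ : IsGQ I) : IsPartialLinear I :=
  hGQ.1

end Quadrangle

theorem encard_le_encard_of_forall_exists {α β : Type*} {s : Set α} {t : Set β}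
    (r : α → β → Prop) (hex : ∀ a ∈ s, ∃ b ∈ t, r a b)
    (hr : ∀ a₁ ∈ s, ∀ a₂ ∈ s, ∀ b, r a₁ b → r a₂ b → a₁ = a₂) : s.encard ≤ t.encard := by
  choose f hft hrf using hex
  have hinj : Function.Injective fun a : s => (⟨f a a.2, hft a a.2⟩ : t) := by
    rintro ⟨a₁, h₁⟩ ⟨a₂, h₂⟩ h
    have hf : f a₁ h₁ = f a₂ h₂ := congrArg Subtype.val h
    exact Subtype.ext (hr a₁ h₁ a₂ h₂ _ (hrf a₁ h₁) (hf ▸ hrf a₂ h₂))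
  exact Function.Embedding.encard_le ⟨_, hinj⟩

section Cover

variable {P₁ L₁ P₂ L₂ : Type} {I₁ : P₁ → L₁ → Prop} {I₂ : P₂ → L₂ → Prop}
  {fp : P₁ → P₂} {fl : L₁ → L₂}

theorem IsCover.injOn_points (h : IsCover I₁ I₂ fp fl) (l : L₁) :
    Set.InjOn fp {x | I₁ x l} :=
  fun _ hx y hy hxy => (h.2.2 l (fp y) (h.1 y l hy)).unique ⟨hx, hxy⟩ ⟨hy, rfl⟩

theorem IsCover.injOn_lines (h : IsCover I₁ I₂ fp fl) (x : P₁) :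
    Set.InjOn fl {l | I₁ x l} :=
  fun _ hl m hm hlm => (h.2.1 x (fl m) (h.1 x m hm)).unique ⟨hl, hlm⟩ ⟨hm, rfl⟩

theorem IsCover.incid_map_iff (h : IsCover I₁ I₂ fp fl) {O : P₂} {l : L₁} :
    I₂ O (fl l) ↔ ∃ x, I₁ x l ∧ fp x = O := by
  refine ⟨fun hO => (h.2.2 l O hO).exists, ?_⟩
  rintro ⟨x, hx, rfl⟩
  exact h.1 x l hx

theorem IsCover.surjective_lines (h : IsCover I₁ I₂ fp fl) (hfp : fp.Surjective)
    (hne : ∀ R, ∃ O, I₂ O R) : fl.Surjective := by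
  intro R
  obtain ⟨O, hOR⟩ := hne R
  obtain ⟨x, rfl⟩ := hfp O
  obtain ⟨l, -, hl⟩ := (h.2.1 x R hOR).exists
  exact ⟨l, hl⟩

theorem IsCover.exists_lift_pathsTo (h : IsCover I₁ I₂ fp fl) {O : P₂} {l : L₁} {p : P₂ × L₂}
    (hp : p ∈ pathsTo I₂ O (fl l)) :
    ∃ a, fp a = O ∧ ∃ q ∈ pathsTo I₁ a l, Prod.map fp fl q = p := by
  obtain ⟨O₁, R₁⟩ := p
  obtain ⟨hOR₁, hO₁R₁, hO₁l⟩ := hp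
  obtain ⟨x, hxl, rfl⟩ := h.incid_map_iff.1 hO₁l
  obtain ⟨M, hxM, rfl⟩ := (h.2.1 x R₁ hO₁R₁).exists
  obtain ⟨a, haM, rfl⟩ := h.incid_map_iff.1 hOR₁
  exact ⟨a, rfl, (x, M), ⟨haM, hxM, hxl⟩, rfl⟩

theorem IsCover.encard_pathsTo_le (h : IsCover I₁ I₂ fp fl)
    (hpaths : ∀ x l, ¬ I₁ x l → (pathsTo I₁ x l).Subsingleton) (hfl : fl.Surjective)
    {O : P₂} {R : L₂} (hOR : ¬ I₂ O R) : (pathsTo I₂ O R).encard ≤ (fp ⁻¹' {O}).encard := by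
  obtain ⟨l, rfl⟩ := hfl R
  refine encard_le_encard_of_forall_exists
    (fun p a => fp a = O ∧ ∃ q ∈ pathsTo I₁ a l, Prod.map fp fl q = p) (fun p hp => ?_) ?_
  · obtain ⟨a, ha, hlift⟩ := h.exists_lift_pathsTo hp
    exact ⟨a, ha, ha, hlift⟩
  rintro _ - _ - a ⟨rfl, q, hq, rfl⟩ ⟨-, q', hq', rfl⟩
  have hal : ¬ I₁ a l := fun hal => hOR (h.1 a l hal)
  rw [hpaths a l hal hq hq']

theorem IsCover.eq_of_map_eq_of_common_neighbour (h : IsCover I₁ I₂ fp fl)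
    (hpl : IsPartialLinear I₂) {x y z : P₁} {l m : L₁} (hxy : fp x = fp y)
    (hxl : I₁ x l) (hzl : I₁ z l) (hzm : I₁ z m) (hym : I₁ y m) : x = y := by
  by_cases hxz : fp x = fp z
  · have hx : x = z := h.injOn_points l hxl hzl hxz
    have hy : y = z := h.injOn_points m hym hzm (hxy ▸ hxz)
    exact hx.trans hy.symm
  · have hlm : fl l = fl m :=
      hpl _ _ hxz _ _ (h.1 x l hxl) (h.1 z l hzl) (hxy ▸ h.1 y m hym) (h.1 z m hzm)
    have hlm' : l = m := h.injOn_lines z hzl hzm hlm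
    exact h.injOn_points m (hlm' ▸ hxl) hym hxy

end Cover

section Factorization

theorem exists_equiv_comp_eq {α β γ : Type*} {f : α → β} {g : α → γ} (hf : f.Surjective)
    (hg : g.Surjective) (hker : ∀ x y, f x = f y ↔ g x = g y) : ∃ e : β ≃ γ, g = e ∘ f := by
  have hcomp : g = (g ∘ Function.surjInv hf) ∘ f :=
    funext fun x => (hker _ _).1 (Function.surjInv_eq hf (f x)).symm
  have hinj : (g ∘ Function.surjInv hf).Injective := fun b c hbc => by
    simpa only [Function.surjInv_eq] using (hker _ _).2 hbc
  have hsurj : (g ∘ Function.surjInv hf).Surjective := .of_comp (hcomp ▸ hg)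
  exact ⟨Equiv.ofBijective _ ⟨hinj, hsurj⟩, hcomp⟩

variable {P₁ L₁ P₂ L₂ P₃ L₃ : Type} {I₂ : P₂ → L₂ → Prop} {I₃ : P₃ → L₃ → Prop}
  {fp : P₁ → P₂} {fl : L₁ → L₂} {gp : P₁ → P₃} {gl : L₁ → L₃}

/-- Injectivity of `flip I` says that a line is determined by the set of its points, so the fibers
of the maps on lines are governed by those of the maps on points. -/
theorem exists_isIso_comp_eq (hfp : fp.Surjective) (hfl : fl.Surjective) (hgp : gp.Surjective)
    (hgl : gl.Surjective) (h₂ : (flip I₂).Injective) (h₃ : (flip I₃).Injective)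
    (hker : ∀ x y, fp x = fp y ↔ gp x = gp y)
    (hincid : ∀ x l, I₂ (fp x) (fl l) ↔ I₃ (gp x) (gl l)) :
    ∃ (αp : P₂ → P₃) (αl : L₂ → L₃), IsIso I₂ I₃ αp αl ∧ gp = αp ∘ fp ∧ gl = αl ∘ fl := by
  have hker_lines (l m : L₁) : fl l = fl m ↔ gl l = gl m := by
    rw [← h₂.eq_iff, ← h₃.eq_iff, funext_iff, funext_iff, hfp.forall, hgp.forall]
    simp only [flip, hincid]
  obtain ⟨αp, rfl⟩ := exists_equiv_comp_eq hfp hgp hker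
  obtain ⟨αl, rfl⟩ := exists_equiv_comp_eq hfl hgl hker_lines
  exact ⟨αp, αl, ⟨αp.bijective, αl.bijective, hfp.forall.2 fun x => hfl.forall.2 (hincid x)⟩,
    rfl, rfl⟩

end Factorization

section Projection

variable {I : P → L → Prop} {P' : Set P} {L' : Set L}

theorem surjective_piPoint : (piPoint I P').Surjective := by
  rintro ⟨O, x, hx, rfl⟩
  exact ⟨⟨x, hx⟩, rfl⟩

theorem surjective_piLine : (piLine I P' L').Surjective := by
  rintro ⟨R, l, hl, rfl⟩
  exact ⟨⟨l, hl⟩, rfl⟩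

theorem eIncid_piLine_iff {O : EPoint I P'} {l : ALine L'} :
    EIncid I P' L' O (piLine I P' L' l) ↔ ∃ x, AIncid I P' L' x l ∧ piPoint I P' x = O := by
  constructor
  · rintro ⟨x, hx, hxl, hO⟩
    exact ⟨⟨x, hx⟩, hxl, Subtype.ext hO.symm⟩
  · rintro ⟨x, hxl, rfl⟩
    exact ⟨x.1, x.2, hxl, rfl⟩

theorem eIncid_of_aIncid {x : APoint P'} {l : ALine L'} (h : AIncid I P' L' x l) :
    EIncid I P' L' (piPoint I P' x) (piLine I P' L' l) :=
  eIncid_piLine_iff.2 ⟨x, h, rfl⟩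

theorem injective_flip_eIncid : (flip (EIncid I P' L')).Injective := by
  have hsub (l m : ALine L') (h : flip (EIncid I P' L') (piLine I P' L' l) =
      flip (EIncid I P' L') (piLine I P' L' m)) : rosette I P' l.1 ⊆ rosette I P' m.1 := by
    rintro O ⟨x, hx, hxl, rfl⟩
    exact (congrFun h (piPoint I P' ⟨x, hx⟩)).mp ⟨x, hx, hxl, rfl⟩
  intro R₁ R₂ h
  obtain ⟨l, rfl⟩ := surjective_piLine R₁
  obtain ⟨m, rfl⟩ := surjective_piLine R₂
  exact Subtype.ext ((hsub l m h).antisymm (hsub m l h.symm))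

theorem eIncid_piPoint_piLine_iff_of_ker_eq {P₂ L₂ : Type} {I₂ : P₂ → L₂ → Prop}
    {fp : APoint P' → P₂} {fl : ALine L' → L₂} (hcov : IsCover (AIncid I P' L') I₂ fp fl)
    (hker : ∀ x y, piPoint I P' x = piPoint I P' y ↔ fp x = fp y) (x : APoint P')
    (l : ALine L') :
    EIncid I P' L' (piPoint I P' x) (piLine I P' L' l) ↔ I₂ (fp x) (fl l) := by
  simp only [eIncid_piLine_iff, hcov.incid_map_iff, hker]

theorem mem_subtendedOvoid_iff {x : APoint P'} {p : P} :
    p ∈ subtendedOvoid I P' x.1 ↔ p ∈ P' ∧ ∃ l, I x.1 l ∧ I p l := by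
  refine and_congr_right fun hp => or_iff_right ?_
  rintro rfl
  exact x.2 hp

theorem mem_subtendedOvoid_of_incid {x : APoint P'} {l : ALine L'} {p : P} (hp : p ∈ P')
    (hpl : I p l.1) (hxl : AIncid I P' L' x l) : p ∈ subtendedOvoid I P' x.1 :=
  mem_subtendedOvoid_iff.2 ⟨hp, l.1, hxl, hpl⟩

theorem not_eIncid_of_notMem_subtendedOvoid {x : APoint P'} {l : ALine L'} {p : P} (hp : p ∈ P')
    (hpl : I p l.1) (hpx : p ∉ subtendedOvoid I P' x.1) :
    ¬ EIncid I P' L' (piPoint I P' x) (piLine I P' L' l) := by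
  intro h
  obtain ⟨y, hyl, hyx⟩ := eIncid_piLine_iff.1 h
  have hovoid : subtendedOvoid I P' y.1 = subtendedOvoid I P' x.1 := congrArg Subtype.val hyx
  exact hpx (hovoid ▸ mem_subtendedOvoid_of_incid hp hpl hyl)

theorem subsingleton_pathsTo_aIncid (hGQ : IsGQ I) {x : APoint P'} {l : ALine L'}
    (hxl : ¬ AIncid I P' L' x l) : (pathsTo (AIncid I P' L') x l).Subsingleton := by
  rintro ⟨y, M⟩ ⟨hxM, hyM, hyl⟩ ⟨z, N⟩ ⟨hxN, hzN, hzl⟩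
  obtain ⟨hyz, hMN⟩ := hGQ.eq_and_eq_of_notIncid hxl hxM hyM hyl hxN hzN hzl
  exact Prod.ext (Subtype.ext hyz) (Subtype.ext hMN)

end Projection

section Hyperplane

variable {I : P → L → Prop} {P' : Set P} {L' : Set L}

theorem IsGeomHyperplane.notMem_of_incid (hHyp : IsGeomHyperplane I P' L') {x : P} {l : L}
    (hx : x ∉ P') (hxl : I x l) : l ∉ L' :=
  (hHyp.2 l).elim (fun h => absurd (h.2 x hxl) hx) And.left

theorem IsGeomHyperplane.existsUnique_base (hHyp : IsGeomHyperplane I P' L') (l : ALine L') :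
    ∃! p, I p l.1 ∧ p ∈ P' :=
  (hHyp.2 l.1).elim (fun h => absurd h.1 l.2) And.right

theorem IsGeomHyperplane.exists_aIncid_of_mem_subtendedOvoid (hHyp : IsGeomHyperplane I P' L')
    {x : APoint P'} {p : P} (hp : p ∈ subtendedOvoid I P' x.1) :
    ∃ l : ALine L', AIncid I P' L' x l ∧ I p l.1 := by
  obtain ⟨-, l, hxl, hpl⟩ := mem_subtendedOvoid_iff.1 hp
  exact ⟨⟨l, hHyp.notMem_of_incid x.2 hxl⟩, hxl, hpl⟩

theorem IsGeomHyperplane.inter_subtendedOvoid (hHyp : IsGeomHyperplane I P' L') (hGQ : IsGQ I)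
    {x y : APoint P'} {l : ALine L'} {q : P} (hxy : x ≠ y) (hxl : AIncid I P' L' x l)
    (hyl : AIncid I P' L' y l) (hq : q ∈ P') (hql : I q l.1) :
    subtendedOvoid I P' x.1 ∩ subtendedOvoid I P' y.1 = {q} := by
  refine Set.eq_singleton_iff_unique_mem.2 ⟨⟨mem_subtendedOvoid_of_incid hq hql hxl,
    mem_subtendedOvoid_of_incid hq hql hyl⟩, fun u ⟨hux, huy⟩ => ?_⟩
  obtain ⟨M, hxM, huM⟩ := hHyp.exists_aIncid_of_mem_subtendedOvoid hux
  obtain ⟨N, hyN, huN⟩ := hHyp.exists_aIncid_of_mem_subtendedOvoid huy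
  by_cases hul : I u l.1
  · exact (hHyp.existsUnique_base l).unique ⟨hul, hux.1⟩ ⟨hql, hq⟩
  · have h : x.1 = y.1 := (hGQ.eq_and_eq_of_notIncid hul huM hxM hxl huN hyN hyl).1
    exact absurd (Subtype.ext h) hxy

theorem IsGeomHyperplane.exists_aIncid_base_ne (hHyp : IsGeomHyperplane I P' L')
    (hGQ : IsGQ I) (hThick : Thick I) (x : APoint P') {q : P} (hq : q ∈ P') :
    ∃ (l : ALine L') (p : P), AIncid I P' L' x l ∧ p ∈ P' ∧ I p l.1 ∧ p ≠ q := by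
  obtain ⟨l, m, -, hlm, -, -, hxl, hxm, -⟩ := hThick.2 x.1
  obtain ⟨p, hpl, hp⟩ := (hHyp.existsUnique_base ⟨l, hHyp.notMem_of_incid x.2 hxl⟩).exists
  obtain ⟨r, hrm, hr⟩ := (hHyp.existsUnique_base ⟨m, hHyp.notMem_of_incid x.2 hxm⟩).exists
  by_cases hpq : p = q
  · refine ⟨⟨m, hHyp.notMem_of_incid x.2 hxm⟩, r, hxm, hr, hrm, ?_⟩
    rintro rfl
    have hxr : x.1 ≠ r := fun h => x.2 (h ▸ hr)
    exact hlm (hGQ.isPartialLinear x.1 r hxr l m hxl (hpq ▸ hpl) hxm hrm)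
  · exact ⟨⟨l, hHyp.notMem_of_incid x.2 hxl⟩, p, hxl, hp, hpl, hpq⟩

theorem IsGeomHyperplane.exists_aIncid_base_notMem_subtendedOvoid
    (hHyp : IsGeomHyperplane I P' L') (hGQ : IsGQ I) (hThick : Thick I) {x y : APoint P'}
    {m : ALine L'} (hxy : x ≠ y) (hxm : AIncid I P' L' x m) (hym : AIncid I P' L' y m) :
    ∃ (l : ALine L') (p : P), AIncid I P' L' y l ∧ p ∈ P' ∧ I p l.1 ∧
      p ∉ subtendedOvoid I P' x.1 := by
  obtain ⟨q, hqm, hq⟩ := (hHyp.existsUnique_base m).exists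
  obtain ⟨l, p, hyl, hp, hpl, hpq⟩ := hHyp.exists_aIncid_base_ne hGQ hThick y hq
  refine ⟨l, p, hyl, hp, hpl, fun hpx => hpq ?_⟩
  rw [← Set.mem_singleton_iff, ← hHyp.inter_subtendedOvoid hGQ hxy hxm hym hq hqm]
  exact ⟨hpx, mem_subtendedOvoid_of_incid hp hpl hyl⟩

theorem IsGeomHyperplane.injOn_piPoint (hHyp : IsGeomHyperplane I P' L') (hGQ : IsGQ I)
    (hThick : Thick I) (m : ALine L') :
    Set.InjOn (piPoint I P') {x | AIncid I P' L' x m} := by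
  intro x hxm y hym h
  by_contra hxy
  obtain ⟨l, p, hyl, hp, hpl, hpx⟩ :=
    hHyp.exists_aIncid_base_notMem_subtendedOvoid hGQ hThick hxy hxm hym
  have hovoid : subtendedOvoid I P' x.1 = subtendedOvoid I P' y.1 := congrArg Subtype.val h
  exact hpx (hovoid ▸ mem_subtendedOvoid_of_incid hp hpl hyl)

theorem IsGeomHyperplane.nontrivial_aIncid (hHyp : IsGeomHyperplane I P' L') (hThick : Thick I)
    (l : ALine L') : {x | AIncid I P' L' x l}.Nontrivial := by
  obtain ⟨q, -, hq⟩ := hHyp.existsUnique_base l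
  obtain ⟨a, b, c, hab, hbc, hac, ha, hb, hc⟩ := hThick.1 l.1
  have hpair {x y : P} (hxy : x ≠ y) (hxl : I x l.1) (hyl : I y l.1) (hxq : x ≠ q) (hyq : y ≠ q) :
      {x | AIncid I P' L' x l}.Nontrivial :=
    ⟨⟨x, fun hx => hxq (hq x ⟨hxl, hx⟩)⟩, hxl, ⟨y, fun hy => hyq (hq y ⟨hyl, hy⟩)⟩, hyl,
      fun h => hxy (congrArg Subtype.val h)⟩
  by_cases haq : a = q
  · exact hpair hbc hb hc (haq ▸ hab.symm) (haq ▸ hac.symm)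
  by_cases hbq : b = q
  · exact hpair hac ha hc haq (hbq ▸ hbc.symm)
  · exact hpair hab ha hb haq hbq

theorem IsGeomHyperplane.exists_eIncid (hHyp : IsGeomHyperplane I P' L') (hThick : Thick I)
    (R : ELine I P' L') : ∃ O, EIncid I P' L' O R := by
  obtain ⟨l, rfl⟩ := surjective_piLine R
  obtain ⟨x, hxl⟩ := (hHyp.nontrivial_aIncid hThick l).nonempty
  exact ⟨piPoint I P' x, eIncid_of_aIncid hxl⟩

theorem IsGeomHyperplane.nonempty_pathsTo_aIncid (hHyp : IsGeomHyperplane I P' L')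
    (hGQ : IsGQ I) {x : APoint P'} {l : ALine L'} {p : P} (hp : p ∈ P') (hpl : I p l.1)
    (hpx : p ∉ subtendedOvoid I P' x.1) : (pathsTo (AIncid I P' L') x l).Nonempty := by
  have hxl : ¬ I x.1 l.1 := fun hxl => hpx (mem_subtendedOvoid_of_incid hp hpl hxl)
  obtain ⟨⟨z, M⟩, ⟨hxM, hzM, hzl⟩, -⟩ := hGQ.2 x.1 l.1 hxl
  have hz : z ∉ P' := by
    intro hz
    obtain rfl : z = p := (hHyp.existsUnique_base l).unique ⟨hzl, hz⟩ ⟨hpl, hp⟩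
    exact hpx (mem_subtendedOvoid_iff.2 ⟨hp, M, hxM, hzM⟩)
  exact ⟨(⟨z, hz⟩, ⟨M, hHyp.notMem_of_incid x.2 hxM⟩), hxM, hzM, hzl⟩

theorem IsGeomHyperplane.eq_of_piPoint_eq_of_common_neighbour (hHyp : IsGeomHyperplane I P' L')
    (hGQ : IsGQ I) (hThick : Thick I) {a b y : APoint P'} {A B : ALine L'}
    (hab : piPoint I P' a = piPoint I P' b) (haA : AIncid I P' L' a A)
    (hyA : AIncid I P' L' y A) (hyB : AIncid I P' L' y B) (hbB : AIncid I P' L' b B) :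
    a = b := by
  by_cases hbA : AIncid I P' L' b A
  · exact hHyp.injOn_piPoint hGQ hThick A haA hbA hab
  · obtain ⟨r, hrA, hr⟩ := (hHyp.existsUnique_base A).exists
    have hrb : r ∈ (piPoint I P' b).1 := hab ▸ mem_subtendedOvoid_of_incid hr hrA haA
    obtain ⟨D, hbD, hrD⟩ := hHyp.exists_aIncid_of_mem_subtendedOvoid hrb
    have h : y.1 = r := (hGQ.eq_and_eq_of_notIncid hbA hbB hyB hyA hbD hrD hrA).1
    exact absurd (h ▸ hr) y.2

theorem IsGeomHyperplane.exists_encard_preimage_piPoint_le (hHyp : IsGeomHyperplane I P' L')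
    (hGQ : IsGQ I) (hThick : Thick I) (O : EPoint I P') :
    ∃ R, ¬ EIncid I P' L' O R ∧
      (piPoint I P' ⁻¹' {O}).encard ≤ (pathsTo (EIncid I P' L') O R).encard := by
  obtain ⟨x, rfl⟩ := surjective_piPoint O
  obtain ⟨m, -, -, -, -, -, hxm, -⟩ := hThick.2 x.1
  lift m to ALine L' using hHyp.notMem_of_incid x.2 hxm
  obtain ⟨t, htm, htx⟩ := (hHyp.nontrivial_aIncid hThick m).exists_ne x
  obtain ⟨l, p, -, hp, hpl, hpx⟩ :=
    hHyp.exists_aIncid_base_notMem_subtendedOvoid hGQ hThick htx.symm hxm htm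
  refine ⟨piLine I P' L' l, not_eIncid_of_notMem_subtendedOvoid hp hpl hpx,
    encard_le_encard_of_forall_exists (fun a p =>
      ∃ q ∈ pathsTo (AIncid I P' L') a l, Prod.map (piPoint I P') (piLine I P' L') q = p) ?_ ?_⟩
  · rintro a (ha : piPoint I P' a = _)
    have hpa : p ∉ (piPoint I P' a).1 := ha ▸ hpx
    obtain ⟨q, haM, hyM, hyl⟩ := hHyp.nonempty_pathsTo_aIncid hGQ hp hpl hpa
    exact ⟨_, ⟨ha ▸ eIncid_of_aIncid haM, eIncid_of_aIncid hyM, eIncid_of_aIncid hyl⟩,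
      q, ⟨haM, hyM, hyl⟩, rfl⟩
  · rintro a (ha : piPoint I P' a = _) b (hb : piPoint I P' b = _) _
      ⟨⟨y, A⟩, ⟨haA, hyA, hyl⟩, rfl⟩ ⟨⟨z, B⟩, ⟨hbB, hzB, hzl⟩, hzy⟩
    obtain rfl : z = y := hHyp.injOn_piPoint hGQ hThick l hzl hyl (congrArg Prod.fst hzy)
    exact hHyp.eq_of_piPoint_eq_of_common_neighbour hGQ hThick (ha.trans hb.symm) haA hyA hzB hbB

theorem IsGeomHyperplane.base_incid_of_eIncid (hHyp : IsGeomHyperplane I P' L') (hGQ : IsGQ I)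
    {O₁ O₂ : EPoint I P'} {l m : ALine L'} {q : P} (hO : O₁ ≠ O₂)
    (h₁l : EIncid I P' L' O₁ (piLine I P' L' l)) (h₂l : EIncid I P' L' O₂ (piLine I P' L' l))
    (h₁m : EIncid I P' L' O₁ (piLine I P' L' m)) (h₂m : EIncid I P' L' O₂ (piLine I P' L' m))
    (hq : q ∈ P') (hql : I q l.1) : I q m.1 := by
  have hinter {n : ALine L'} {r : P} (h₁ : EIncid I P' L' O₁ (piLine I P' L' n))
      (h₂ : EIncid I P' L' O₂ (piLine I P' L' n)) (hr : r ∈ P') (hrn : I r n.1) :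
      O₁.1 ∩ O₂.1 = {r} := by
    obtain ⟨x, hxn, rfl⟩ := eIncid_piLine_iff.1 h₁
    obtain ⟨y, hyn, rfl⟩ := eIncid_piLine_iff.1 h₂
    exact hHyp.inter_subtendedOvoid hGQ (fun h => hO (congrArg _ h)) hxn hyn hr hrn
  obtain ⟨r, hrm, hr⟩ := (hHyp.existsUnique_base m).exists
  have hqr : ({q} : Set P) = {r} := (hinter h₁l h₂l hq hql).symm.trans (hinter h₁m h₂m hr hrm)
  exact Set.singleton_injective hqr ▸ hrm

theorem IsGeomHyperplane.exists_pathsTo_ne (hHyp : IsGeomHyperplane I P' L') (hGQ : IsGQ I)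
    (hThick : Thick I) {w x y : APoint P'} {M N : ALine L'} {q : P} (hMN : M ≠ N)
    (hxw : x ≠ w) (hxM : AIncid I P' L' x M) (hwM : AIncid I P' L' w M)
    (hyN : AIncid I P' L' y N) (hxy : piPoint I P' x = piPoint I P' y) (hq : q ∈ P')
    (hqM : I q M.1) (hqN : I q N.1) :
    ∃ l, ¬ EIncid I P' L' (piPoint I P' y) (piLine I P' L' l) ∧ AIncid I P' L' w l ∧
      ∃ p ∈ pathsTo (AIncid I P' L') y l, w ≠ p.1 := by
  obtain ⟨l, p, hwl, hp, hpl, hpx⟩ :=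
    hHyp.exists_aIncid_base_notMem_subtendedOvoid hGQ hThick hxw hxM hwM
  have hpy : p ∉ (piPoint I P' y).1 := hxy ▸ hpx
  obtain ⟨⟨z, K⟩, hyK, hzK, hzl⟩ := hHyp.nonempty_pathsTo_aIncid hGQ hp hpl hpy
  refine ⟨l, not_eIncid_of_notMem_subtendedOvoid hp hpl hpy, hwl, (z, K), ⟨hyK, hzK, hzl⟩, ?_⟩
  rintro rfl
  have hwN : ¬ I w.1 N.1 := fun hwN => hMN <| Subtype.ext <|
    hGQ.isPartialLinear w.1 q (fun h => w.2 (h ▸ hq)) _ _ hwM hqM hwN hqN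
  have h : q = y.1 := (hGQ.eq_and_eq_of_notIncid hwN hwM hqM hqN hzK hyK hyN).1
  exact y.2 (h ▸ hq)

/-- If two rosettes shared two ovoids `O₁` and `O₂`, then they would give two paths from `O₁` to
every rosette through `O₂`, and projecting in the quadrangle gives a third one. -/
theorem IsGeomHyperplane.isPartialLinear_eIncid (hHyp : IsGeomHyperplane I P' L')
    (hGQ : IsGQ I) (hThick : Thick I)
    (hpaths : ∀ O R, ¬ EIncid I P' L' O R → (pathsTo (EIncid I P' L') O R).encard ≤ 2) :
    IsPartialLinear (EIncid I P' L') := by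
  intro O₁ O₂ hO R₁ R₂ h₁M h₂M h₁N h₂N
  by_contra hR
  obtain ⟨M, rfl⟩ := surjective_piLine R₁
  obtain ⟨N, rfl⟩ := surjective_piLine R₂
  obtain ⟨q, hqM, hq⟩ := (hHyp.existsUnique_base M).exists
  have hqN : I q N.1 := hHyp.base_incid_of_eIncid hGQ hO h₁M h₂M h₁N h₂N hq hqM
  obtain ⟨x, hxM, hxy⟩ := eIncid_piLine_iff.1 h₁M
  obtain ⟨w, hwM, rfl⟩ := eIncid_piLine_iff.1 h₂M
  obtain ⟨y, hyN, rfl⟩ := eIncid_piLine_iff.1 h₁N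
  have hxw : x ≠ w := fun h => hO (hxy ▸ congrArg _ h)
  obtain ⟨l, hyl, hwl, ⟨z, K⟩, ⟨hyK, hzK, hzl⟩, hwz⟩ := hHyp.exists_pathsTo_ne hGQ hThick
    (fun h => hR (congrArg _ h)) hxw hxM hwM hyN hxy hq hqM hqN
  have hwz' : piPoint I P' w ≠ piPoint I P' z :=
    fun h => hwz (hHyp.injOn_piPoint hGQ hThick l hwl hzl h)
  have hwl' := eIncid_of_aIncid hwl
  have hsub : {(piPoint I P' w, piLine I P' L' M), (piPoint I P' w, piLine I P' L' N),
      (piPoint I P' z, piLine I P' L' K)} ⊆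
      pathsTo (EIncid I P' L') (piPoint I P' y) (piLine I P' L' l) := by
    rintro _ (rfl | rfl | rfl)
    exacts [⟨h₁M, h₂M, hwl'⟩, ⟨h₁N, h₂N, hwl'⟩,
      ⟨eIncid_of_aIncid hyK, eIncid_of_aIncid hzK, eIncid_of_aIncid hzl⟩]
  have hthree : 3 ≤ (pathsTo (EIncid I P' L') (piPoint I P' y) (piLine I P' L' l)).encard :=
    (Set.encard_eq_three.2 ⟨_, _, _, by simp [hR], by simp [hwz'], by simp [hwz'], rfl⟩).ge.trans
      (Set.encard_le_encard hsub)
  exact absurd (hthree.trans (hpaths _ _ hyl)) (by norm_num)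

theorem IsGeomHyperplane.piPoint_eq_of_map_eq (hHyp : IsGeomHyperplane I P' L') (hGQ : IsGQ I)
    {P₂ L₂ : Type} {I₂ : P₂ → L₂ → Prop} {fp : APoint P' → P₂} {fl : ALine L' → L₂}
    (hcov : IsCover (AIncid I P' L') I₂ fp fl) (hpl : IsPartialLinear I₂) {x y : APoint P'}
    (hxy : fp x = fp y) : piPoint I P' x = piPoint I P' y := by
  have hsub {x y : APoint P'} (hxy : fp x = fp y) :
      subtendedOvoid I P' x.1 ⊆ subtendedOvoid I P' y.1 := by
    intro p hpx
    by_contra hpy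
    obtain ⟨l, hxl, hp⟩ := hHyp.exists_aIncid_of_mem_subtendedOvoid hpx
    obtain ⟨⟨z, M⟩, hyM, hzM, hzl⟩ := hHyp.nonempty_pathsTo_aIncid hGQ hpx.1 hp hpy
    have h : x = y := hcov.eq_of_map_eq_of_common_neighbour hpl hxy hxl hzl hzM hyM
    exact hpy (h ▸ hpx)
  exact Subtype.ext ((hsub hxy).antisymm (hsub hxy.symm))

theorem IsGeomHyperplane.piPoint_eq_iff (hHyp : IsGeomHyperplane I P' L') (hGQ : IsGQ I)
    (hThick : Thick I) {P₂ L₂ : Type} {I₂ : P₂ → L₂ → Prop} {fp : APoint P' → P₂}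
    {fl : ALine L' → L₂} (hcov : IsCover (AIncid I P' L') I₂ fp fl) (hpl : IsPartialLinear I₂)
    (hfib : ∀ O, (fp ⁻¹' {O}).encard = 2)
    (hpaths : ∀ O R, ¬ EIncid I P' L' O R → (pathsTo (EIncid I P' L') O R).encard ≤ 2)
    (x y : APoint P') : piPoint I P' x = piPoint I P' y ↔ fp x = fp y := by
  have hsub : fp ⁻¹' {fp x} ⊆ piPoint I P' ⁻¹' {piPoint I P' x} :=
    fun _ hz => hHyp.piPoint_eq_of_map_eq hGQ hcov hpl hz
  have hcard : (piPoint I P' ⁻¹' {piPoint I P' x}).encard ≤ (fp ⁻¹' {fp x}).encard := by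
    obtain ⟨R, hR, hle⟩ :=
      hHyp.exists_encard_preimage_piPoint_le hGQ hThick (piPoint I P' x)
    exact (hle.trans (hpaths _ R hR)).trans_eq (hfib _).symm
  have hfibers : fp ⁻¹' {fp x} = piPoint I P' ⁻¹' {piPoint I P' x} :=
    (Set.finite_of_encard_eq_coe (hfib _)).eq_of_subset_of_encard_le hsub hcard
  simpa [eq_comm] using (Set.ext_iff.1 hfibers y).symm

end Hyperplane

theorem statement11_general (I : P → L → Prop) (P' : Set P) (L' : Set L)
    (hGQ : IsGQ I) (hThick : Thick I) (hHyp : IsGeomHyperplane I P' L')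
    (gp : APoint P' → EPoint I P') (gl : ALine L' → ELine I P' L')
    (hcov : IsCover (AIncid I P' L') (EIncid I P' L') gp gl)
    (hfibp : ∀ O : EPoint I P', (gp ⁻¹' {O}).ncard = 2) :
    ∃ (αp : EPoint I P' → EPoint I P') (αl : ELine I P' L' → ELine I P' L'),
      IsAuto (EIncid I P' L') αp αl ∧
      gp = αp ∘ piPoint I P' ∧ gl = αl ∘ piLine I P' L' := by
  have hfib (O : EPoint I P') : (gp ⁻¹' {O}).encard = 2 := by
    rw [← (Set.finite_of_ncard_ne_zero (by simp [hfibp])).cast_ncard_eq, hfibp, Nat.cast_ofNat]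
  have hgp : gp.Surjective := fun O =>
    Set.nonempty_of_encard_ne_zero (s := gp ⁻¹' {O}) (by rw [hfib O]; exact two_ne_zero)
  have hgl : gl.Surjective := hcov.surjective_lines hgp (hHyp.exists_eIncid hThick)
  have hpaths (O : EPoint I P') (R : ELine I P' L') (hOR : ¬ EIncid I P' L' O R) :
      (pathsTo (EIncid I P' L') O R).encard ≤ 2 :=
    hfib O ▸ hcov.encard_pathsTo_le (fun _ _ => subsingleton_pathsTo_aIncid hGQ) hgl hOR
  have hpl : IsPartialLinear (EIncid I P' L') :=
    hHyp.isPartialLinear_eIncid hGQ hThick hpaths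
  have hker := hHyp.piPoint_eq_iff hGQ hThick hcov hpl hfib hpaths
  exact exists_isIso_comp_eq surjective_piPoint surjective_piLine hgp hgl
    injective_flip_eIncid injective_flip_eIncid hker
    (eIncid_piPoint_piLine_iff_of_ker_eq hcov hker)

/-- every 2-cover `γ : A → E` factorizes as `γ = α ∘ π` for some
automorphism `α` of `E`. -/
theorem statement11 (I : P → L → Prop) (P' : Set P) (L' : Set L)
    (hGQ : IsGQ I) (hThick : Thick I)
    (hSubGQ : IsGQ (SubIncid I P' L')) (hSubThick : Thick (SubIncid I P' L'))
    (hFull : IsFull I P' L') (hHyp : IsGeomHyperplane I P' L')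
    (gp : APoint P' → EPoint I P') (gl : ALine L' → ELine I P' L')
    (hcov : IsCover (AIncid I P' L') (EIncid I P' L') gp gl)
    (hfibp : ∀ O : EPoint I P', (gp ⁻¹' {O}).ncard = 2)
    (hfibl : ∀ R : ELine I P' L', (gl ⁻¹' {R}).ncard = 2) :
    ∃ (αp : EPoint I P' → EPoint I P') (αl : ELine I P' L' → ELine I P' L'),
      IsAuto (EIncid I P' L') αp αl ∧
      gp = αp ∘ piPoint I P' ∧ gl = αl ∘ piLine I P' L' := by
  exact statement11_general I P' L' hGQ hThick hHyp gp gl hcov hfibp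

end GQpaper
end

section
/- Let S be a finite generalized quadrangle of order (s,t) with s ≥ 2, and S' a proper full subquadrangle of order (s,t') such that t' ≠ 1, t = s·t', (θ−1)·t = s², and every subtended ovoid of S' is subtended by exactly θ points of S outside S', where θ > 1. Then the geometry E, whose points are the subtended ovoids of S' and whose lines are the rosettes, with incidence given by membership, is a semipartial geometry with parameters s* = s − 1, t* = t, α* = θ, μ* = θ(t − t'); that is: every line of E is incident with exactly s points; every point of E is incident with exactly t + 1 lines; two distinct points of E are incident with at most one common line; for every non-incident point-line pair (p,L) of E, the number of points incident with L that are collinear with p in E is 0 or θ; and any two non-collinear points of E have exactly θ(t − t') common collinear points. -/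
/-!
Let `O` be a subtended ovoid and `X` the set of the `θ` points subtending it. Then `(X, O)` is a
dual grid with `(|X| - 1) * (|O| - 1) = s ^ 2`, the extreme case of an inequality of Payne and Thas
(*Finite generalized quadrangles*, 1.4.1): summed over all points `z`, the squared deviation of
`|z⊥ ∩ O|` from `t' + 1` is used up by the points of `X` and their neighbors, so every other point
has exactly `t' + 1` neighbors in `O`.

Hence two subtended ovoids that share exactly one point are subtended by collinear points. If `x` is
a point outside `S'` on a line `l` that meets `S'` in `w`, the rosette of `l` therefore consists of
`O_x` and the subtended ovoids meeting `O_x` in `{w}` only; it depends on `O_x` and `w` alone. So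
`x ↦ O_x` is a cover of `E` by the geometry `S \ S'`, with fibers of size `θ` whose points have
pairwise no common neighbor outside `S'`, and the parameters of `E` are found by counting in `S`.
-/

namespace GQpaper

variable {P L : Type}

/-- Collinearity of two points of the geometry `E`. -/
def ECol {P L : Type} (I : P → L → Prop) (P' : Set P) (L' : Set L)
    (O O' : EPoint I P') : Prop :=
  ∃ R : ELine I P' L', O.1 ∈ R.1 ∧ O'.1 ∈ R.1

section Counting

variable {α β : Type*}

theorem ncard_eq_one_of_existsUnique {p : α → Prop} (h : ∃! a, p a) : {a | p a}.ncard = 1 := by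
  obtain ⟨a, ha, huniq⟩ := h
  exact Set.ncard_eq_one.mpr ⟨a, Set.eq_singleton_iff_unique_mem.mpr ⟨ha, huniq⟩⟩

theorem sum_toFinset_eq_ncard_mul {D : Set α} [Fintype D] {f : α → ℤ} {c : ℤ}
    (hf : ∀ a ∈ D, f a = c) : ∑ a ∈ D.toFinset, f a = D.ncard * c := by
  rw [Finset.sum_congr rfl fun a ha => hf a (Set.mem_toFinset.mp ha), Finset.sum_const,
    nsmul_eq_mul, Set.ncard_eq_toFinset_card']

theorem sum_ncard_sep_comm [Fintype β] (A : Finset α) (R : α → β → Prop) :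
    ∑ b, {a | a ∈ A ∧ R a b}.ncard = ∑ a ∈ A, {b | R a b}.ncard := by
  classical
  convert (Finset.sum_card_bipartiteAbove_eq_sum_card_bipartiteBelow R
    (s := A) (t := Finset.univ)).symm using 2 with b _ a _
  all_goals
    rw [← Set.ncard_coe_finset]
    simp [Finset.bipartiteAbove, Finset.bipartiteBelow]

theorem ncard_eq_ncard_mul_of_existsUnique [Finite α] [Finite β] {A : Set α} {B : Set β}
    (R : α → β → Prop) {n : ℕ} (hA : ∀ a ∈ A, ∃! b, b ∈ B ∧ R a b)
    (hB : ∀ b ∈ B, {a ∈ A | R a b}.ncard = n) : A.ncard = B.ncard * n := by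
  classical
  have := Fintype.ofFinite α
  have := Fintype.ofFinite β
  rw [← mul_one A.ncard, Set.ncard_eq_toFinset_card', Set.ncard_eq_toFinset_card']
  refine Finset.card_mul_eq_card_mul R (fun a ha => ?_) (fun b hb => ?_)
  · simpa [Finset.card_eq_one_iff_existsUnique] using hA a (Set.mem_toFinset.mp ha)
  · rw [← hB b (Set.mem_toFinset.mp hb), Set.ncard_eq_toFinset_card']
    congr 1
    ext
    simp

variable [Fintype β] {A : Finset α} {R : α → β → Prop} {r m : ℕ}

theorem sum_ncard_sep_eq_mul (hr : ∀ a ∈ A, {b | R a b}.ncard = r) :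
    ∑ b, {a | a ∈ A ∧ R a b}.ncard = A.card * r := by
  rw [sum_ncard_sep_comm, Finset.sum_congr rfl hr, Finset.sum_const, smul_eq_mul]

theorem sum_ncard_sep_sq_eq (hr : ∀ a ∈ A, {b | R a b}.ncard = r)
    (hm : (A : Set α).Pairwise fun a a' => {b | R a b ∧ R a' b}.ncard = m) :
    ∑ b, {a | a ∈ A ∧ R a b}.ncard ^ 2 = A.card * (r + (A.card - 1) * m) := by
  classical
  have sq_eq_pairs (b : β) : {a | a ∈ A ∧ R a b}.ncard ^ 2 =
      {p : α × α | p ∈ A ×ˢ A ∧ R p.1 b ∧ R p.2 b}.ncard := by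
    rw [sq, ← Set.ncard_prod]
    congr 1
    ext
    simp only [Set.mem_prod, Set.mem_ofPred_eq, Finset.mem_product, and_and_and_comm]
  have sum_diag : ∑ p ∈ A.diag, {b | R p.1 b ∧ R p.2 b}.ncard = A.card * r := by
    simp only [Finset.sum_diag, and_self, Finset.sum_congr rfl hr, Finset.sum_const, smul_eq_mul]
  have offDiag : ∀ p ∈ A.offDiag, {b | R p.1 b ∧ R p.2 b}.ncard = m := fun p hp =>
    let ⟨h₁, h₂, hne⟩ := Finset.mem_offDiag.mp hp
    hm h₁ h₂ hne
  rw [Finset.sum_congr rfl fun b _ => sq_eq_pairs b,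
    sum_ncard_sep_comm (A ×ˢ A) (fun p b => R p.1 b ∧ R p.2 b), ← Finset.diag_union_offDiag,
    Finset.sum_union (Finset.disjoint_diag_offDiag A), sum_diag, Finset.sum_congr rfl offDiag,
    Finset.sum_const, Finset.offDiag_card, smul_eq_mul, ← Nat.mul_sub_one]
  ring

theorem sum_sq_ncard_sep_sub {A : Set α} (hA : A.Finite) (hr : ∀ a ∈ A, {b | R a b}.ncard = r)
    (hm : A.Pairwise fun a a' => {b | R a b ∧ R a' b}.ncard = m) (c : ℤ) :
    ∑ b, (({a ∈ A | R a b}.ncard : ℤ) - c) ^ 2 =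
      A.ncard * (r + (A.ncard - 1 : ℕ) * m) - 2 * c * (A.ncard * r) + c ^ 2 * Nat.card β := by
  lift A to Finset α using hA
  have first := congrArg (Nat.cast : ℕ → ℤ) (sum_ncard_sep_eq_mul hr)
  have second := congrArg (Nat.cast : ℕ → ℤ) (sum_ncard_sep_sq_eq hr hm)
  push_cast at first second
  simp only [sub_sq, Finset.sum_add_distrib, Finset.sum_sub_distrib, ← Finset.mul_sum,
    ← Finset.sum_mul, Finset.mem_coe, Set.ncard_coe_finset, first, second, Finset.sum_const,
    Finset.card_univ, nsmul_eq_mul, Nat.card_eq_fintype_card]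
  ring

end Counting

section GeneralizedQuadrangle

variable {I : P → L → Prop} {s t : ℕ} {x y z : P} {l l' : L}

theorem Collinear.refl (x : P) : Collinear I x x := Or.inl rfl

theorem Collinear.symm (h : Collinear I x y) : Collinear I y x :=
  h.imp Eq.symm fun ⟨l, hx, hy⟩ => ⟨l, hy, hx⟩

theorem Collinear.of_incident (hx : I x l) (hy : I y l) : Collinear I x y := Or.inr ⟨l, hx, hy⟩

theorem IsGQ.eq_of_incident (h : IsGQ I) (hxy : x ≠ y) (hx : I x l) (hy : I y l) (hx' : I x l')
    (hy' : I y l') : l = l' :=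
  h.1 x y hxy l l' hx hy hx' hy'

theorem IsGQ.flip (h : IsGQ I) : IsGQ (flip I) := by
  refine ⟨fun l l' hne x y hxl hxl' hyl hyl' => ?_, fun l x hxl => ?_⟩
  · by_contra hxy
    exact hne (h.eq_of_incident hxy hxl hyl hxl' hyl')
  · obtain ⟨p, ⟨hx, hpp, hl⟩, huniq⟩ := h.2 x l hxl
    refine ⟨p.swap, ⟨hl, hpp, hx⟩, fun q ⟨hql, hqq, hqx⟩ => ?_⟩
    rw [← huniq q.swap ⟨hqx, hqq, hql⟩, Prod.swap_swap]

theorem HasOrder.flip (h : HasOrder I s t) : HasOrder (flip I) t s := ⟨h.2, h.1⟩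

theorem IsGQ.existsUnique_collinear (h : IsGQ I) (hxl : ¬ I x l) :
    ∃! y, I y l ∧ Collinear I x y := by
  obtain ⟨⟨y, m⟩, ⟨hxm, hym, hyl⟩, huniq⟩ := h.2 x l hxl
  refine ⟨y, ⟨hyl, .of_incident hxm hym⟩, ?_⟩
  rintro z ⟨hzl, rfl | ⟨n, hxn, hzn⟩⟩
  · exact absurd hzl hxl
  · exact congrArg Prod.fst (huniq (z, n) ⟨hxn, hzn, hzl⟩)

theorem IsGQ.incident_of_collinear (h : IsGQ I) (hyz : y ≠ z) (hy : I y l) (hz : I z l)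
    (hxy : Collinear I x y) (hxz : Collinear I x z) : I x l := by
  by_contra hxl
  exact hyz ((h.existsUnique_collinear hxl).unique ⟨hy, hxy⟩ ⟨hz, hxz⟩)

theorem IsGQ.existsUnique_line (h : IsGQ I) (hxy : x ≠ y) (hcol : Collinear I x y) :
    ∃! l, I x l ∧ I y l := by
  obtain ⟨l, hx, hy⟩ := hcol.resolve_left hxy
  exact ⟨l, ⟨hx, hy⟩, fun m ⟨hxm, hym⟩ => h.eq_of_incident hxy hxm hym hx hy⟩

theorem HasOrder.ncard_points_ne (h : HasOrder I s t) (hxl : I x l) :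
    {y | y ≠ x ∧ I y l}.ncard = s := by
  have hdiff : {y | y ≠ x ∧ I y l} = {y | I y l} \ {x} := by
    ext
    simp [and_comm]
  have hx : x ∈ {y | I y l} := hxl
  rw [hdiff, Set.ncard_sdiff_singleton_of_mem hx, h.1, Nat.add_sub_cancel]

variable [Finite P] [Finite L]

theorem IsGQ.ncard_collinear_ne (h : IsGQ I) (hord : HasOrder I s t) (x : P) :
    {y | y ≠ x ∧ Collinear I y x}.ncard = (t + 1) * s := by
  rw [← hord.2 x]
  refine ncard_eq_ncard_mul_of_existsUnique I (fun y ⟨hyx, hcol⟩ => ?_) fun l hxl => ?_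
  · simpa only [Set.mem_ofPred_eq, and_comm] using h.existsUnique_line hyx hcol
  · rw [← hord.ncard_points_ne hxl]
    congr 1
    ext y
    exact ⟨fun ⟨⟨hyx, _⟩, hyl⟩ => ⟨hyx, hyl⟩,
      fun ⟨hyx, hyl⟩ => ⟨⟨hyx, .of_incident hyl hxl⟩, hyl⟩⟩

theorem IsGQ.ncard_collinear (h : IsGQ I) (hord : HasOrder I s t) (x : P) :
    {y | Collinear I x y}.ncard = (t + 1) * s + 1 := by
  have hinsert : {y | Collinear I x y} = insert x {y | y ≠ x ∧ Collinear I y x} := by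
    ext y
    by_cases hyx : y = x
    · simp [hyx, Collinear.refl]
    · simp only [Set.mem_insert_iff, Set.mem_ofPred_eq, hyx, ne_eq, not_false_eq_true, true_and,
        false_or]
      exact ⟨.symm, .symm⟩
  rw [hinsert, Set.ncard_insert_of_notMem fun hx => hx.1 rfl, h.ncard_collinear_ne hord]

theorem IsGQ.card_points (h : IsGQ I) (hord : HasOrder I s t) (l : L) :
    Nat.card P = (s + 1) * (s * t + 1) := by
  have off_line : {x | ¬ I x l}.ncard = {y | I y l}.ncard * (t * s) := by
    refine ncard_eq_ncard_mul_of_existsUnique (Collinear I)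
      (fun x hxl => h.existsUnique_collinear hxl) fun y hyl => ?_
    have hsub : {x | x ≠ y ∧ I x l} ⊆ {x | x ≠ y ∧ Collinear I x y} :=
      fun x ⟨hxy, hxl⟩ => ⟨hxy, .of_incident hxl hyl⟩
    have hcount := Set.ncard_sdiff_add_ncard_of_subset hsub
    rw [h.ncard_collinear_ne hord, hord.ncard_points_ne hyl, add_one_mul] at hcount
    rw [← Nat.add_right_cancel hcount]
    congr 1
    ext x
    refine ⟨fun ⟨hxl, hxy⟩ => ⟨⟨fun e => hxl (e ▸ hyl), hxy⟩, fun hx => hxl hx.2⟩,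
      fun ⟨⟨hne, hxy⟩, hx⟩ => ⟨fun hxl => hx ⟨hne, hxl⟩, hxy⟩⟩
  rw [hord.1] at off_line
  rw [← Set.ncard_add_ncard_compl {y | I y l}, hord.1, Set.compl_ofPred, off_line]
  ring

theorem IsGQ.card_lines (h : IsGQ I) (hord : HasOrder I s t) (x : P) :
    Nat.card L = (t + 1) * (t * s + 1) :=
  h.flip.card_points hord.flip x

theorem IsGQ.ncard_common_neighbors (h : IsGQ I) (hord : HasOrder I s t)
    (hxy : ¬ Collinear I x y) : {z | Collinear I x z ∧ Collinear I y z}.ncard = t + 1 := by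
  rw [← mul_one (Set.ncard _), ← hord.2 x]
  symm
  refine ncard_eq_ncard_mul_of_existsUnique (fun l z => I z l) (fun l hxl => ?_)
    fun z ⟨hxz, hyz⟩ => ncard_eq_one_of_existsUnique (h.existsUnique_line ?_ hxz)
  · have hyl : ¬ I y l := fun hyl => hxy (.of_incident hxl hyl)
    convert h.existsUnique_collinear hyl using 2 with z
    exact ⟨fun ⟨⟨_, hyz⟩, hzl⟩ => ⟨hzl, hyz⟩, fun ⟨hzl, hyz⟩ => ⟨⟨.of_incident hxl hzl, hyz⟩, hzl⟩⟩
  · rintro rfl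
    exact hxy hyz.symm

end GeneralizedQuadrangle

/-- A dual grid: two disjoint sets of pairwise noncollinear points, every point of the one being
collinear with every point of the other. -/
structure IsDualGrid (I : P → L → Prop) (X Y : Set P) : Prop where
  disjoint : Disjoint X Y
  left : X.Pairwise fun x x' => ¬ Collinear I x x'
  right : Y.Pairwise fun y y' => ¬ Collinear I y y'
  collinear : ∀ x ∈ X, ∀ y ∈ Y, Collinear I x y

section DualGrid

variable {I : P → L → Prop} {s t u : ℕ} {X Y : Set P} {x x' y z : P} {l : L}

theorem IsGQ.existsUnique_mem_of_forall_collinear [Finite P] [Finite L] (h : IsGQ I)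
    (hord : HasOrder I s t) (hYpair : Y.Pairwise fun y y' => ¬ Collinear I y y')
    (hY : Y.ncard = t + 1) (hxY : x ∉ Y) (hcol : ∀ y ∈ Y, Collinear I x y) (hxl : I x l) :
    ∃! y, y ∈ Y ∧ I y l := by
  have unique {m : L} {y y' : P} (hy : y ∈ Y ∧ I y m) (hy' : y' ∈ Y ∧ I y' m) : y = y' := by
    by_contra hne
    exact hYpair hy.1 hy'.1 hne (.of_incident hy.2 hy'.2)
  have hcount : Y.ncard = {m | I x m ∧ ∃ y ∈ Y, I y m}.ncard * 1 := by
    refine ncard_eq_ncard_mul_of_existsUnique I (fun y hy => ?_) fun m ⟨_, y, hy, hym⟩ =>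
      ncard_eq_one_of_existsUnique ⟨y, ⟨hy, hym⟩, fun y' hy' => unique hy' ⟨hy, hym⟩⟩
    obtain ⟨m, ⟨hxm, hym⟩, huniq⟩ :=
      h.existsUnique_line (ne_of_mem_of_not_mem hy hxY).symm (hcol y hy)
    exact ⟨m, ⟨⟨hxm, y, hy, hym⟩, hym⟩, fun m' hm' => huniq m' ⟨hm'.1.1, hm'.2⟩⟩
  have hall : {m | I x m ∧ ∃ y ∈ Y, I y m} = {m | I x m} :=
    Set.eq_of_subset_of_ncard_le (fun m hm => hm.1) (by rw [hord.2]; lia)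
  obtain ⟨y, hy, hyl⟩ := (hall.ge hxl : I x l ∧ ∃ y ∈ Y, I y l).2
  exact ⟨y, ⟨hy, hyl⟩, fun y' hy' => unique hy' ⟨hy, hyl⟩⟩

namespace IsDualGrid

theorem ncard_collinear_of_mem_left (hXY : IsDualGrid I X Y) (hx : x ∈ X) :
    {y ∈ Y | Collinear I y x}.ncard = Y.ncard := by
  rw [Set.sep_eq_self_iff_mem_true.mpr fun y hy => (hXY.collinear x hx y hy).symm]

section Finite

variable [Finite P] [Finite L] (hXY : IsDualGrid I X Y) (h : IsGQ I) (hord : HasOrder I s t)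
  (hY : Y.ncard = t + 1)
include hXY h hord hY

theorem mem_right_of_collinear (hx : x ∈ X) (hx' : x' ∈ X) (hne : x ≠ x')
    (hzx : Collinear I z x) (hzx' : Collinear I z x') : z ∈ Y := by
  have hsub : Y ⊆ {y | Collinear I x y ∧ Collinear I x' y} :=
    fun y hy => ⟨hXY.collinear x hx y hy, hXY.collinear x' hx' y hy⟩
  have heq := Set.eq_of_subset_of_ncard_le hsub
    (by rw [h.ncard_common_neighbors hord (hXY.left hx hx' hne), hY])
  exact heq.ge ⟨hzx.symm, hzx'.symm⟩

theorem ncard_collinear_of_collinear_left (hx : x ∈ X) (hzx : z ≠ x)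
    (hcol : Collinear I z x) : {y ∈ Y | Collinear I y z}.ncard = 1 := by
  obtain ⟨l, hzl, hxl⟩ := hcol.resolve_left hzx
  obtain ⟨y, ⟨hy, hyl⟩, huniq⟩ := h.existsUnique_mem_of_forall_collinear hord hXY.right hY
    (Set.disjoint_left.mp hXY.disjoint hx) (hXY.collinear x hx) hxl
  refine ncard_eq_one_of_existsUnique ⟨y, ⟨hy, .of_incident hyl hzl⟩, fun y' ⟨hy', hy'z⟩ => ?_⟩
  exact huniq y' ⟨hy', h.incident_of_collinear hzx hzl hxl hy'z (hXY.collinear x hx y' hy').symm⟩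

theorem ncard_neighbors_sdiff_right :
    ({z | z ∉ X ∧ ∃ x ∈ X, Collinear I z x} \ Y).ncard = X.ncard * ((t + 1) * s - (t + 1)) := by
  refine ncard_eq_ncard_mul_of_existsUnique (Collinear I) (fun z ⟨⟨_, x, hx, hzx⟩, hzY⟩ => ?_)
    fun x hx => ?_
  · refine ⟨x, ⟨hx, hzx⟩, fun x' ⟨hx', hzx'⟩ => ?_⟩
    by_contra hne
    exact hzY (hXY.mem_right_of_collinear h hord hY hx' hx hne hzx' hzx)
  · have hsub : Y ⊆ {z | z ≠ x ∧ Collinear I z x} := fun y hy =>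
      ⟨(hXY.disjoint.ne_of_mem hx hy).symm, (hXY.collinear x hx y hy).symm⟩
    rw [← h.ncard_collinear_ne hord x, ← hY, ← Set.ncard_sdiff hsub]
    congr 1
    ext z
    exact ⟨fun ⟨⟨⟨hzX, _⟩, hzY⟩, hzx⟩ => ⟨⟨(ne_of_mem_of_not_mem hx hzX).symm, hzx⟩, hzY⟩,
      fun ⟨⟨hne, hzx⟩, hzY⟩ => ⟨⟨⟨fun hzX => hXY.left hzX hx hne hzx, x, hx, hzx⟩, hzY⟩, hzx⟩⟩

theorem ncard_neighbors (hX : X.Nonempty) : {z | z ∉ X ∧ ∃ x ∈ X, Collinear I z x}.ncard =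
    X.ncard * ((t + 1) * s - (t + 1)) + (t + 1) := by
  obtain ⟨x, hx⟩ := hX
  have hsub : Y ⊆ {z | z ∉ X ∧ ∃ x ∈ X, Collinear I z x} := fun y hy =>
    ⟨Set.disjoint_right.mp hXY.disjoint hy, x, hx, (hXY.collinear x hx y hy).symm⟩
  rw [← Set.ncard_sdiff_add_ncard_of_subset hsub, hXY.ncard_neighbors_sdiff_right h hord hY, hY]

end Finite

theorem sum_sq_ncard_collinear_sub [Fintype P] [Finite L] (hXY : IsDualGrid I X Y) (h : IsGQ I)
    (hord : HasOrder I s t) (hY : Y.ncard = t + 1) (ht : t = s * u) (hs : 0 < s)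
    (hX : (X.ncard - 1) * t = s ^ 2) :
    ∑ z, (({y ∈ Y | Collinear I y z}.ncard : ℤ) - (u + 1)) ^ 2 =
      X.ncard * ((t : ℤ) - u) ^ 2 +
        {z | z ∉ X ∧ ∃ x ∈ X, Collinear I z x}.ncard * (u : ℤ) ^ 2 := by
  have hX1 : 1 < X.ncard := by
    by_contra! hle
    rw [Nat.sub_eq_zero_of_le hle, zero_mul] at hX
    exact (pow_pos hs 2).ne hX
  have hXpos : X.Nonempty := Set.nonempty_of_ncard_ne_zero (by lia)
  have hXu : (X.ncard - 1) * u = s := by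
    subst ht
    refine Nat.eq_of_mul_eq_mul_left hs ?_
    linarith
  obtain ⟨l, -⟩ : {l | I hXpos.some l}.Nonempty :=
    Set.nonempty_of_ncard_ne_zero (by rw [hord.2]; lia)
  rw [sum_sq_ncard_sep_sub Y.toFinite (fun y _ => h.ncard_collinear hord y)
    (fun y hy y' hy' hne => h.ncard_common_neighbors hord (hXY.right hy hy' hne)), hY,
    hXY.ncard_neighbors h hord hY hXpos, h.card_points hord l]
  obtain ⟨m, hm⟩ := Nat.exists_eq_add_of_lt hX1
  have hle : t + 1 ≤ (t + 1) * s := Nat.le_mul_of_pos_right _ hs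
  rw [hm, Nat.add_sub_cancel] at hXu
  rw [hm]
  push_cast [hle]
  subst ht hXu
  push_cast
  ring

-- The points of `X` and their neighbors already account for the whole sum of squares in
-- `sum_sq_ncard_collinear_sub`, so every other summand vanishes.
theorem ncard_collinear_of_forall_not_collinear [Finite P] [Finite L] (hXY : IsDualGrid I X Y)
    (h : IsGQ I) (hord : HasOrder I s t) (hY : Y.ncard = t + 1) (ht : t = s * u) (hs : 0 < s)
    (hX : (X.ncard - 1) * t = s ^ 2) (hz : ∀ x ∈ X, ¬ Collinear I z x) :
    {y ∈ Y | Collinear I y z}.ncard = u + 1 := by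
  classical
  have := Fintype.ofFinite P
  let N : Set P := {z | z ∉ X ∧ ∃ x ∈ X, Collinear I z x}
  let f (z : P) : ℤ := (({y ∈ Y | Collinear I y z}.ncard : ℤ) - (u + 1)) ^ 2
  have sum_left : ∑ z ∈ X.toFinset, f z = X.ncard * ((t : ℤ) - u) ^ 2 := by
    refine sum_toFinset_eq_ncard_mul fun x hx => ?_
    simp only [f, hXY.ncard_collinear_of_mem_left hx, hY]
    push_cast
    ring
  have sum_neighbors : ∑ z ∈ N.toFinset, f z = N.ncard * (u : ℤ) ^ 2 := by
    refine sum_toFinset_eq_ncard_mul fun z ⟨hzX, x, hx, hzx⟩ => ?_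
    simp only [f, hXY.ncard_collinear_of_collinear_left h hord hY hx
      (ne_of_mem_of_not_mem hx hzX).symm hzx]
    push_cast
    ring
  have hdisj : Disjoint X.toFinset N.toFinset := by
    rw [Set.disjoint_toFinset, Set.disjoint_left]
    exact fun x hx hN => hN.1 hx
  have sum_rest : ∑ z ∈ (X.toFinset ∪ N.toFinset)ᶜ, f z = 0 := by
    have htotal : ∑ z, f z = _ := hXY.sum_sq_ncard_collinear_sub h hord hY ht hs hX
    rw [← Finset.sum_add_sum_compl (X.toFinset ∪ N.toFinset), Finset.sum_union hdisj, sum_left,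
      sum_neighbors] at htotal
    exact add_eq_left.mp htotal
  have hz_rest : z ∈ (X.toFinset ∪ N.toFinset)ᶜ := by
    simp only [Finset.mem_compl, Finset.mem_union, Set.mem_toFinset, not_or]
    exact ⟨fun hzX => hz z hzX (.refl z), fun ⟨_, x, hx, hzx⟩ => hz x hx hzx⟩
  have hfz := (Finset.sum_eq_zero_iff_of_nonneg fun z _ => sq_nonneg _).mp sum_rest z hz_rest
  have := pow_eq_zero_iff two_ne_zero |>.mp hfz
  lia

end IsDualGrid

end DualGrid

/-- `(P', L')` is a nonempty full subquadrangle of order `(s, t')` of the generalized quadrangle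
`(P, L, I)` of order `(s, t)`. -/
structure IsFullSubquadrangle (I : P → L → Prop) (P' : Set P) (L' : Set L) (s t t' : ℕ) :
    Prop where
  gq : IsGQ I
  order : HasOrder I s t
  subGQ : IsGQ (SubIncid I P' L')
  subOrder : HasOrder (SubIncid I P' L') s t'
  full : IsFull I P' L'
  nonempty : P'.Nonempty

/-- The points outside the subquadrangle that subtend `O`. -/
def subtenders (I : P → L → Prop) (P' O : Set P) : Set P :=
  {y | y ∉ P' ∧ subtendedOvoid I P' y = O}

theorem self_mem_subtenders {I : P → L → Prop} {P' : Set P} {x : P} (hx : x ∉ P') :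
    x ∈ subtenders I P' (subtendedOvoid I P' x) :=
  ⟨hx, rfl⟩

theorem subtendedOvoid_mem_rosette {I : P → L → Prop} {P' : Set P} {x : P} {l : L} (hx : x ∉ P')
    (hxl : I x l) : subtendedOvoid I P' x ∈ rosette I P' l :=
  ⟨x, hx, hxl, rfl⟩

namespace IsFullSubquadrangle

variable {I : P → L → Prop} {P' O : Set P} {L' : Set L} {s t t' : ℕ} {x y z w : P} {l : L}

theorem not_incident (h : IsFullSubquadrangle I P' L' s t t') (hx : x ∉ P') (hl : l ∈ L') :
    ¬ I x l :=
  fun hxl => hx (h.full l hl x hxl)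

theorem notMem_of_incident (h : IsFullSubquadrangle I P' L' s t t') (hx : x ∉ P') (hxl : I x l) :
    l ∉ L' :=
  fun hl => h.not_incident hx hl hxl

theorem ncard_lines_through (h : IsFullSubquadrangle I P' L' s t t') (hx : x ∈ P') :
    {l ∈ L' | I x l}.ncard = t' + 1 := by
  rw [← h.subOrder.2 ⟨x, hx⟩, ← Set.ncard_image_of_injective _ Subtype.val_injective]
  congr 1
  ext l
  simp [SubIncid, and_comm]

theorem mem_lines (h : IsFullSubquadrangle I P' L' s t t') (hx : x ∈ P') (hy : y ∈ P')
    (hxy : x ≠ y) (hxl : I x l) (hyl : I y l) : l ∈ L' := by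
  obtain ⟨m, hm, hxm⟩ : {m ∈ L' | I x m}.Nonempty :=
    Set.nonempty_of_ncard_ne_zero (by rw [h.ncard_lines_through hx]; lia)
  by_cases hym : I y m
  · exact h.gq.eq_of_incident hxy hxm hym hxl hyl ▸ hm
  · obtain ⟨⟨z, n⟩, ⟨hyn, hzn, hzm⟩, -⟩ := h.subGQ.2 ⟨y, hy⟩ ⟨m, hm⟩ hym
    have hxz : x = z := (h.gq.existsUnique_collinear hym).unique
      ⟨hxm, .of_incident hyl hxl⟩ ⟨hzm, .of_incident hyn hzn⟩
    exact h.gq.eq_of_incident hxy (hxz ▸ hzn) hyn hxl hyl ▸ n.2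

theorem eq_of_incident_of_notMem (h : IsFullSubquadrangle I P' L' s t t') (hx : x ∈ P')
    (hy : y ∈ P') (hl : l ∉ L') (hxl : I x l) (hyl : I y l) : x = y := by
  by_contra hxy
  exact hl (h.mem_lines hx hy hxy hxl hyl)

theorem isOvoid_subtendedOvoid (h : IsFullSubquadrangle I P' L' s t t') (hx : x ∉ P') :
    IsOvoid I P' L' (subtendedOvoid I P' x) := by
  refine ⟨fun y hy => hy.1, fun l hl => ?_⟩
  obtain ⟨y, ⟨hyl, hxy⟩, huniq⟩ := h.gq.existsUnique_collinear (h.not_incident hx hl)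
  exact ⟨y, ⟨⟨h.full l hl y hyl, hxy⟩, hyl⟩, fun z hz => huniq z ⟨hz.2, hz.1.2⟩⟩

theorem pairwise_not_collinear_of_isOvoid (h : IsFullSubquadrangle I P' L' s t t')
    (hO : IsOvoid I P' L' O) : O.Pairwise fun y y' => ¬ Collinear I y y' := by
  intro y hy y' hy' hne hcol
  obtain ⟨l, hyl, hyl'⟩ := hcol.resolve_left hne
  have hl := h.mem_lines (hO.1 hy) (hO.1 hy') hne hyl hyl'
  exact hne ((hO.2 l hl).unique ⟨hy, hyl⟩ ⟨hy', hyl'⟩)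

theorem inter_subtendedOvoid_eq (h : IsFullSubquadrangle I P' L' s t t') (hx : x ∉ P')
    (hxy : x ≠ y) (hxl : I x l) (hyl : I y l) (hw : w ∈ P') (hwl : I w l) :
    subtendedOvoid I P' x ∩ subtendedOvoid I P' y = {w} := by
  refine Set.eq_singleton_iff_unique_mem.mpr
    ⟨⟨⟨hw, .of_incident hxl hwl⟩, hw, .of_incident hyl hwl⟩, fun v ⟨hvx, hvy⟩ => ?_⟩
  exact h.eq_of_incident_of_notMem hvx.1 hw (h.notMem_of_incident hx hxl)
    (h.gq.incident_of_collinear hxy hxl hyl hvx.2.symm hvy.2.symm) hwl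

variable [Finite P] [Finite L]

theorem ncard_of_isOvoid (h : IsFullSubquadrangle I P' L' s t t') (hO : IsOvoid I P' L' O) :
    O.ncard = s * t' + 1 := by
  have hcount : L'.ncard = O.ncard * (t' + 1) :=
    ncard_eq_ncard_mul_of_existsUnique (fun l y => I y l) hO.2
      fun y hy => h.ncard_lines_through (hO.1 hy)
  have hlines : L'.ncard = (t' + 1) * (t' * s + 1) :=
    h.subGQ.card_lines h.subOrder ⟨_, h.nonempty.some_mem⟩
  refine Nat.eq_of_mul_eq_mul_left t'.succ_pos ?_
  linarith

theorem isDualGrid_subtenders (h : IsFullSubquadrangle I P' L' s t t') (hs : 0 < s) (ht' : 0 < t')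
    (hO : IsOvoid I P' L' O) : IsDualGrid I (subtenders I P' O) O where
  disjoint := Set.disjoint_left.mpr fun x hx hxO => hx.1 (hO.1 hxO)
  right := h.pairwise_not_collinear_of_isOvoid hO
  collinear := by
    rintro x ⟨-, rfl⟩ y hy
    exact hy.2
  left := by
    rintro x ⟨-, rfl⟩ y ⟨-, hyO⟩ hxy hcol
    obtain ⟨l, hxl, hyl⟩ := hcol.resolve_left hxy
    have on_l : ∀ w ∈ subtendedOvoid I P' x, I w l := fun w hw =>
      h.gq.incident_of_collinear hxy hxl hyl hw.2.symm (hyO.ge hw).2.symm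
    obtain ⟨w, w', hw, hw', hne⟩ := (Set.one_lt_ncard_iff).mp
      (h.ncard_of_isOvoid hO ▸ Nat.lt_add_of_pos_left (Nat.mul_pos hs ht'))
    exact h.pairwise_not_collinear_of_isOvoid hO hw hw' hne
      (.of_incident (on_l w hw) (on_l w' hw'))

theorem existsUnique_incident_of_notMem (h : IsFullSubquadrangle I P' L' s t t')
    (ht : t = s * t') (hs : 0 < s) (hl : l ∉ L') : ∃! w, w ∈ P' ∧ I w l := by
  obtain ⟨x, hx, hxl⟩ : ∃ x, x ∉ P' ∧ I x l := by
    by_contra! hall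
    obtain ⟨y, z, hy, hz, hyz⟩ := (Set.one_lt_ncard_iff).mp
      (h.order.1 l ▸ Nat.lt_add_of_pos_left hs)
    exact hyz (h.eq_of_incident_of_notMem (by_contra (hall y · hy)) (by_contra (hall z · hz))
      hl hy hz)
  have hO := h.isOvoid_subtendedOvoid hx
  obtain ⟨w, ⟨hw, hwl⟩, -⟩ := h.gq.existsUnique_mem_of_forall_collinear h.order
    (h.pairwise_not_collinear_of_isOvoid hO) (ht ▸ h.ncard_of_isOvoid hO) (fun hxO => hx hxO.1)
    (fun y hy => hy.2) hxl
  exact ⟨w, ⟨hw.1, hwl⟩, fun v ⟨hv, hvl⟩ => h.eq_of_incident_of_notMem hv hw.1 hl hvl hwl⟩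

theorem ncard_external_points (h : IsFullSubquadrangle I P' L' s t t') (ht : t = s * t')
    (hs : 0 < s) (hl : l ∉ L') : {x | x ∉ P' ∧ I x l}.ncard = s := by
  obtain ⟨w, ⟨hw, hwl⟩, huniq⟩ := h.existsUnique_incident_of_notMem ht hs hl
  rw [← h.order.ncard_points_ne hwl]
  congr 1
  ext x
  exact ⟨fun ⟨hx, hxl⟩ => ⟨(ne_of_mem_of_not_mem hw hx).symm, hxl⟩,
    fun ⟨hxw, hxl⟩ => ⟨fun hx => hxw (huniq x ⟨hx, hxl⟩), hxl⟩⟩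

theorem eq_of_subtendedOvoid_eq (h : IsFullSubquadrangle I P' L' s t t') (ht : t = s * t')
    (hs : 0 < s) (ht' : 0 < t') (hO : IsOvoid I P' L' O) (hx : x ∈ subtenders I P' O)
    (hy : y ∈ subtenders I P' O) (hz : z ∉ P') (hzx : Collinear I z x) (hzy : Collinear I z y) :
    x = y := by
  by_contra hxy
  exact hz (hO.1 ((h.isDualGrid_subtenders hs ht' hO).mem_right_of_collinear h.gq h.order
    (ht ▸ h.ncard_of_isOvoid hO) hx hy hxy hzx hzy))

end IsFullSubquadrangle

/-- The full subquadrangles of the theorem: `t = s * t'`, `(θ - 1) * t = s ^ 2`, and every subtended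
ovoid is `θ`-subtended, so that `subtenders` and the ovoid attain the bound on the size of dual
grids. -/
structure IsTightSubquadrangle (I : P → L → Prop) (P' : Set P) (L' : Set L) (s t t' θ : ℕ) : Prop
    extends IsFullSubquadrangle I P' L' s t t' where
  two_le : 2 ≤ s
  order_eq : t = s * t'
  tight : (θ - 1) * t = s ^ 2
  theta_subtended : AllThetaSubtended I P' θ

namespace IsTightSubquadrangle

variable {I : P → L → Prop} {P' : Set P} {L' : Set L} {s t t' θ : ℕ} {x x' y z w : P} {l l' : L}

theorem pos_s (h : IsTightSubquadrangle I P' L' s t t' θ) : 0 < s := by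
  have := h.two_le
  lia

theorem pos_t' (h : IsTightSubquadrangle I P' L' s t t' θ) : 0 < t' := by
  refine Nat.pos_of_ne_zero fun h0 => (pow_pos h.pos_s 2).ne ?_
  rw [← h.tight, h.order_eq, h0, mul_zero, mul_zero]

theorem pos_t (h : IsTightSubquadrangle I P' L' s t t' θ) : 0 < t :=
  h.order_eq ▸ Nat.mul_pos h.pos_s h.pos_t'

variable [Finite P] [Finite L]

theorem ncard_subtendedOvoid (h : IsTightSubquadrangle I P' L' s t t' θ) (hx : x ∉ P') :
    (subtendedOvoid I P' x).ncard = t + 1 :=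
  h.order_eq ▸ h.ncard_of_isOvoid (h.isOvoid_subtendedOvoid hx)

theorem eq_of_common_neighbor (h : IsTightSubquadrangle I P' L' s t t' θ) (hx : x ∉ P')
    (hx' : x' ∉ P') (heq : subtendedOvoid I P' x = subtendedOvoid I P' x') (hz : z ∉ P')
    (hzx : Collinear I z x) (hzx' : Collinear I z x') : x = x' :=
  h.eq_of_subtendedOvoid_eq h.order_eq h.pos_s h.pos_t' (h.isOvoid_subtendedOvoid hx')
    ⟨hx, heq⟩ ⟨hx', rfl⟩ hz hzx hzx'

theorem eq_of_incident_of_subtendedOvoid_eq (h : IsTightSubquadrangle I P' L' s t t' θ)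
    (hx : x ∉ P') (hx' : x' ∉ P') (heq : subtendedOvoid I P' x = subtendedOvoid I P' x')
    (hxl : I x l) (hxl' : I x' l) : x = x' :=
  h.eq_of_common_neighbor hx hx' heq hx (.refl x) (.of_incident hxl hxl')

theorem ncard_inter_subtendedOvoid (h : IsTightSubquadrangle I P' L' s t t' θ) (hx : x ∉ P')
    (hzx : ∀ x' ∈ subtenders I P' (subtendedOvoid I P' x), ¬ Collinear I z x') :
    (subtendedOvoid I P' x ∩ subtendedOvoid I P' z).ncard = t' + 1 := by
  have hO := h.isOvoid_subtendedOvoid hx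
  have hX : ((subtenders I P' (subtendedOvoid I P' x)).ncard - 1) * t = s ^ 2 := by
    rw [← h.tight, ← h.theta_subtended x hx, subtenders]
  rw [← (h.isDualGrid_subtenders h.pos_s h.pos_t' hO).ncard_collinear_of_forall_not_collinear
    h.gq h.order (h.ncard_subtendedOvoid hx) h.order_eq h.pos_s hX hzx]
  congr 1
  ext y
  exact ⟨fun ⟨hyx, hyz⟩ => ⟨hyx, hyz.2.symm⟩, fun ⟨hyx, hyz⟩ => ⟨hyx, hyx.1, hyz.symm⟩⟩

theorem exists_collinear_of_inter_eq_singleton (h : IsTightSubquadrangle I P' L' s t t' θ)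
    (hx : x ∉ P') (hz : z ∉ P')
    (hinter : subtendedOvoid I P' x ∩ subtendedOvoid I P' z = {w}) :
    ∃ z' ∈ subtenders I P' (subtendedOvoid I P' z), x ≠ z' ∧ Collinear I x z' := by
  have := h.pos_t'
  obtain ⟨z', hz', hcol⟩ : ∃ z' ∈ subtenders I P' (subtendedOvoid I P' z), Collinear I x z' := by
    by_contra! hnone
    have hcard := h.ncard_inter_subtendedOvoid hz hnone
    rw [Set.inter_comm, hinter, Set.ncard_singleton] at hcard
    lia
  refine ⟨z', hz', ?_, hcol⟩
  rintro rfl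
  have hcard := h.ncard_subtendedOvoid hx
  rw [← hz'.2, Set.inter_self] at hinter
  rw [hinter, Set.ncard_singleton] at hcard
  exact h.pos_t.ne (by lia)

theorem exists_mem_incident (h : IsTightSubquadrangle I P' L' s t t' θ) (hx : x ∉ P')
    (hxl : I x l) : ∃ w ∈ P', I w l :=
  (h.existsUnique_incident_of_notMem h.order_eq h.pos_s (h.notMem_of_incident hx hxl)).exists

theorem mem_rosette_iff (h : IsTightSubquadrangle I P' L' s t t' θ) (hx : x ∉ P') (hxl : I x l)
    (hw : w ∈ P') (hwl : I w l) (hz : z ∉ P') :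
    subtendedOvoid I P' z ∈ rosette I P' l ↔ subtendedOvoid I P' z = subtendedOvoid I P' x ∨
      subtendedOvoid I P' x ∩ subtendedOvoid I P' z = {w} := by
  constructor
  · rintro ⟨y, -, hyl, heq⟩
    rw [heq]
    by_cases hxy : x = y
    · exact .inl (congrArg _ hxy.symm)
    · exact .inr (h.inter_subtendedOvoid_eq hx hxy hxl hyl hw hwl)
  · rintro (heq | hinter)
    · exact heq ▸ subtendedOvoid_mem_rosette hx hxl
    · obtain ⟨z', ⟨hz', hzz'⟩, hne, hcol⟩ := h.exists_collinear_of_inter_eq_singleton hx hz hinter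
      obtain ⟨m, hxm, hz'm⟩ := hcol.resolve_left hne
      obtain ⟨v, hv, hvm⟩ := h.exists_mem_incident hx hxm
      have hvw : v = w := by
        rw [← Set.singleton_eq_singleton_iff, ← hinter, ← hzz',
          h.inter_subtendedOvoid_eq hx hne hxm hz'm hv hvm]
      subst hvw
      have hml := h.gq.eq_of_incident (ne_of_mem_of_not_mem hv hx) hvm hxm hwl hxl
      exact ⟨z', hz', hml ▸ hz'm, hzz'.symm⟩

theorem rosette_eq_of_subtendedOvoid_eq (h : IsTightSubquadrangle I P' L' s t t' θ) (hx : x ∉ P')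
    (hx' : x' ∉ P') (heq : subtendedOvoid I P' x = subtendedOvoid I P' x') (hxl : I x l)
    (hx'l' : I x' l') (hw : w ∈ P') (hwl : I w l) (hwl' : I w l') :
    rosette I P' l = rosette I P' l' := by
  have mem_iff {z : P} (hz : z ∉ P') :
      subtendedOvoid I P' z ∈ rosette I P' l ↔ subtendedOvoid I P' z ∈ rosette I P' l' := by
    rw [h.mem_rosette_iff hx hxl hw hwl hz, h.mem_rosette_iff hx' hx'l' hw hwl' hz, heq]
  ext O
  constructor
  · rintro ⟨z, hz, hzl, rfl⟩
    exact (mem_iff hz).mp (subtendedOvoid_mem_rosette hz hzl)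
  · rintro ⟨z, hz, hzl', rfl⟩
    exact (mem_iff hz).mpr (subtendedOvoid_mem_rosette hz hzl')

theorem eq_of_mem_rosettes (h : IsTightSubquadrangle I P' L' s t t' θ) (hx : x ∉ P')
    (hxl : I x l) (hxl' : I x l') (hz : z ∉ P')
    (hne : subtendedOvoid I P' z ≠ subtendedOvoid I P' x)
    (hzl : subtendedOvoid I P' z ∈ rosette I P' l)
    (hzl' : subtendedOvoid I P' z ∈ rosette I P' l') : l = l' := by
  obtain ⟨w, hw, hwl⟩ := h.exists_mem_incident hx hxl
  obtain ⟨w', hw', hwl'⟩ := h.exists_mem_incident hx hxl'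
  have hinter := ((h.mem_rosette_iff hx hxl hw hwl hz).mp hzl).resolve_left hne
  have hinter' := ((h.mem_rosette_iff hx hxl' hw' hwl' hz).mp hzl').resolve_left hne
  obtain rfl : w = w' := Set.singleton_eq_singleton_iff.mp (hinter.symm.trans hinter')
  exact h.gq.eq_of_incident (ne_of_mem_of_not_mem hw hx) hwl hxl hwl' hxl'

theorem eq_of_rosette_eq (h : IsTightSubquadrangle I P' L' s t t' θ) (hx : x ∉ P') (hxl : I x l)
    (hxl' : I x l') (heq : rosette I P' l = rosette I P' l') : l = l' := by
  have hcard := h.ncard_external_points h.order_eq h.pos_s (h.notMem_of_incident hx hxl)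
  obtain ⟨y, ⟨hy, hyl⟩, hyx⟩ := Set.exists_ne_of_one_lt_ncard (hcard ▸ h.two_le) x
  have hmem := subtendedOvoid_mem_rosette hy hyl
  exact h.eq_of_mem_rosettes hx hxl hxl' hy
    (fun hO => hyx (h.eq_of_incident_of_subtendedOvoid_eq hy hx hO hyl hxl)) hmem (heq ▸ hmem)

end IsTightSubquadrangle

theorem ECol.symm {I : P → L → Prop} {P' : Set P} {L' : Set L} {O O' : EPoint I P'}
    (h : ECol I P' L' O O') : ECol I P' L' O' O :=
  let ⟨R, hO, hO'⟩ := h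
  ⟨R, hO', hO⟩

section Cover

variable {P₁ L₁ P₂ L₂ : Type} {I₁ : P₁ → L₁ → Prop} {I₂ : P₂ → L₂ → Prop} {fp : P₁ → P₂}
  {fl : L₁ → L₂}

theorem IsCover.ncard_points (h : IsCover I₁ I₂ fp fl) (l : L₁) :
    {y | I₂ y (fl l)}.ncard = {x | I₁ x l}.ncard := by
  have hbij : Set.BijOn fp {x | I₁ x l} {y | I₂ y (fl l)} := by
    refine ⟨fun x hx => h.1 x l hx, fun x hx x' hx' heq => ?_, fun y hy => ?_⟩
    · exact (h.2.2 l (fp x) (h.1 x l hx)).unique ⟨hx, rfl⟩ ⟨hx', heq.symm⟩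
    · exact (h.2.2 l y hy).exists
  exact hbij.ncard_eq.symm

theorem IsCover.flip (h : IsCover I₁ I₂ fp fl) : IsCover (flip I₁) (flip I₂) fl fp :=
  ⟨fun l x hxl => h.1 x l hxl, h.2.2, h.2.1⟩

theorem IsCover.ncard_lines (h : IsCover I₁ I₂ fp fl) (x : P₁) :
    {m | I₂ (fp x) m}.ncard = {l | I₁ x l}.ncard :=
  h.flip.ncard_points x

end Cover

namespace IsTightSubquadrangle

variable {I : P → L → Prop} {P' : Set P} {L' : Set L} {s t t' θ : ℕ}

theorem exists_mem_subtenders (O : EPoint I P') : ∃ x, x ∈ subtenders I P' O.1 := by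
  obtain ⟨-, x, hx, rfl⟩ := O
  exact ⟨x, self_mem_subtenders hx⟩

theorem ncard_subtenders (h : IsTightSubquadrangle I P' L' s t t' θ) (O : EPoint I P') :
    (subtenders I P' O.1).ncard = θ := by
  obtain ⟨-, x, hx, rfl⟩ := O
  exact h.theta_subtended x hx

variable [Finite P] [Finite L]

theorem isCover_pi (h : IsTightSubquadrangle I P' L' s t t' θ) :
    IsCover (AIncid I P' L') (EIncid I P' L') (piPoint I P') (piLine I P' L') := by
  refine ⟨fun x l hxl => subtendedOvoid_mem_rosette x.2 hxl, ?_, ?_⟩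
  · rintro ⟨x, hx⟩ ⟨-, m, hm, rfl⟩ ⟨y, hy, hym, (heq : subtendedOvoid I P' x = _)⟩
    obtain ⟨w, hw, hwm⟩ := h.exists_mem_incident hy hym
    have hwx : w ∈ subtendedOvoid I P' x := heq ▸ ⟨hw, .of_incident hym hwm⟩
    obtain ⟨l, hxl, hwl⟩ := hwx.2.resolve_left (ne_of_mem_of_not_mem hw hx).symm
    have hlm := h.rosette_eq_of_subtendedOvoid_eq hx hy heq hxl hym hw hwl hwm
    refine ⟨⟨l, h.notMem_of_incident hx hxl⟩, ⟨hxl, Subtype.ext hlm⟩, fun l' ⟨hxl', hl'm⟩ => ?_⟩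
    exact Subtype.ext (h.eq_of_rosette_eq hx hxl' hxl ((congrArg Subtype.val hl'm).trans hlm.symm))
  · rintro ⟨l, hl⟩ ⟨-, -⟩ ⟨x, hx, hxl, rfl⟩
    refine ⟨⟨x, hx⟩, ⟨hxl, rfl⟩, fun ⟨x', hx'⟩ ⟨hx'l, heq⟩ => Subtype.ext ?_⟩
    exact h.eq_of_incident_of_subtendedOvoid_eq hx' hx (congrArg Subtype.val heq) hx'l hxl

theorem ncard_points_of_line (h : IsTightSubquadrangle I P' L' s t t' θ) (R : ELine I P' L') :
    {O : EPoint I P' | O.1 ∈ R.1}.ncard = s := by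
  obtain ⟨-, l, hl, rfl⟩ := R
  refine (h.isCover_pi.ncard_points ⟨l, hl⟩).trans ?_
  rw [← h.ncard_external_points h.order_eq h.pos_s hl,
    ← Set.ncard_image_of_injective _ Subtype.val_injective]
  congr 1
  ext x
  simp [AIncid, and_comm]

theorem ncard_lines_of_point (h : IsTightSubquadrangle I P' L' s t t' θ) (O : EPoint I P') :
    {R : ELine I P' L' | O.1 ∈ R.1}.ncard = t + 1 := by
  obtain ⟨-, x, hx, rfl⟩ := O
  refine (h.isCover_pi.ncard_lines ⟨x, hx⟩).trans ?_
  rw [← h.order.2 x, ← Set.ncard_image_of_injective _ Subtype.val_injective]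
  congr 1
  ext l
  simpa [AIncid] using h.notMem_of_incident hx

theorem exists_line_through (h : IsTightSubquadrangle I P' L' s t t' θ) {x : P} (hx : x ∉ P')
    {R : ELine I P' L'} (hR : subtendedOvoid I P' x ∈ R.1) :
    ∃ l, I x l ∧ R.1 = rosette I P' l := by
  obtain ⟨l, hxl, rfl⟩ := (h.isCover_pi.2.1 ⟨x, hx⟩ R hR).exists
  exact ⟨l, hxl, rfl⟩

theorem line_eq_of_mem (h : IsTightSubquadrangle I P' L' s t t' θ) {O O' : EPoint I P'}
    (hne : O ≠ O') {R R' : ELine I P' L'} (hOR : O.1 ∈ R.1) (hO'R : O'.1 ∈ R.1) (hOR' : O.1 ∈ R'.1)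
    (hO'R' : O'.1 ∈ R'.1) : R = R' := by
  obtain ⟨-, x, hx, rfl⟩ := O
  obtain ⟨-, z, hz, rfl⟩ := O'
  obtain ⟨l, hxl, hRl⟩ := h.exists_line_through hx hOR
  obtain ⟨l', hxl', hR'l'⟩ := h.exists_line_through hx hOR'
  have hll' : l = l' := h.eq_of_mem_rosettes hx hxl hxl' hz (fun heq => hne (Subtype.ext heq.symm))
    (hRl ▸ hO'R) (hR'l' ▸ hO'R')
  exact Subtype.ext (hRl.trans (hll' ▸ hR'l'.symm))

theorem eCol_iff (h : IsTightSubquadrangle I P' L' s t t' θ) {O O' : EPoint I P'} {x : P}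
    (hx : x ∈ subtenders I P' O.1) :
    ECol I P' L' O O' ↔ ∃ z ∈ subtenders I P' O'.1, Collinear I x z := by
  obtain ⟨O, hO⟩ := O
  obtain ⟨hx, rfl : subtendedOvoid I P' x = O⟩ := hx
  constructor
  · rintro ⟨R, hxR, hOR⟩
    obtain ⟨l, hxl, hRl⟩ := h.exists_line_through hx hxR
    obtain ⟨z, hz, hzl, hOz⟩ := hRl ▸ hOR
    exact ⟨z, ⟨hz, hOz.symm⟩, .of_incident hxl hzl⟩
  · rintro ⟨z, ⟨hz, hOz⟩, hxz⟩
    obtain ⟨l, hxl, hzl⟩ : ∃ l, I x l ∧ I z l := by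
      obtain rfl | hl := hxz
      · obtain ⟨l, hxl⟩ : {l | I x l}.Nonempty :=
          Set.nonempty_of_ncard_ne_zero (by rw [h.order.2]; lia)
        exact ⟨l, hxl, hxl⟩
      · exact hl
    exact ⟨⟨_, l, h.notMem_of_incident hx hxl, rfl⟩, subtendedOvoid_mem_rosette hx hxl,
      hOz ▸ subtendedOvoid_mem_rosette hz hzl⟩

theorem eq_of_mem_subtenders (h : IsTightSubquadrangle I P' L' s t t' θ) {O : EPoint I P'}
    {x x' z : P} (hx : x ∈ subtenders I P' O.1) (hx' : x' ∈ subtenders I P' O.1) (hz : z ∉ P')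
    (hzx : Collinear I z x) (hzx' : Collinear I z x') : x = x' :=
  h.eq_of_common_neighbor hx.1 hx'.1 (hx.2.trans hx'.2.symm) hz hzx hzx'

theorem not_eCol_of_base_mem (h : IsTightSubquadrangle I P' L' s t t' θ) {p O : EPoint I P'} {l : L}
    {w : P} (hwl : I w l) (hw : w ∈ p.1) (hp : p.1 ∉ rosette I P' l)
    (hO : O.1 ∈ rosette I P' l) : ¬ ECol I P' L' p O := by
  intro hcol
  obtain ⟨y, hy, hyl, hOy⟩ := hO
  obtain ⟨x, hx, hyx⟩ := (h.eCol_iff ⟨hy, hOy.symm⟩).mp hcol.symm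
  have hwx : w ∈ subtendedOvoid I P' x := hx.2.symm ▸ hw
  have hxl := h.gq.incident_of_collinear (ne_of_mem_of_not_mem hwx.1 hy).symm hyl hwl hyx.symm hwx.2
  exact hp ⟨x, hx.1, hxl, hx.2.symm⟩

theorem ncard_eCol_of_base_notMem (h : IsTightSubquadrangle I P' L' s t t' θ) {p : EPoint I P'}
    {l : L} (hl : l ∉ L') {w : P} (hwP' : w ∈ P') (hwl : I w l) (hw : w ∉ p.1)
    (hp : p.1 ∉ rosette I P' l) :
    {O : EPoint I P' | O.1 ∈ rosette I P' l ∧ ECol I P' L' p O}.ncard = θ := by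
  rw [← h.ncard_subtenders p, ← mul_one (Set.ncard _)]
  symm
  refine ncard_eq_ncard_mul_of_existsUnique
    (fun x O => ∃ y ∈ subtenders I P' O.1, I y l ∧ Collinear I x y)
    (fun x hx => ?_) fun O ⟨⟨y, hy, hyl, hOy⟩, hcol⟩ => ncard_eq_one_of_existsUnique ?_
  · have hxl : ¬ I x l := fun hxl => hp ⟨x, hx.1, hxl, hx.2.symm⟩
    obtain ⟨y, ⟨hyl, hxy⟩, huniq⟩ := h.gq.existsUnique_collinear hxl
    have hy : y ∉ P' := fun hy => by
      obtain rfl := h.eq_of_incident_of_notMem hwP' hy hl hwl hyl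
      exact hw (hx.2.le ⟨hy, hxy⟩)
    refine ⟨piPoint I P' ⟨y, hy⟩, ⟨⟨subtendedOvoid_mem_rosette hy hyl, ?_⟩,
      y, self_mem_subtenders hy, hyl, hxy⟩, ?_⟩
    · exact (h.eCol_iff hx).mpr ⟨y, self_mem_subtenders hy, hxy⟩
    · rintro O ⟨-, y', hy', hy'l, hxy'⟩
      obtain rfl := huniq y' ⟨hy'l, hxy'⟩
      exact Subtype.ext hy'.2.symm
  · obtain ⟨x, hx, hyx⟩ := (h.eCol_iff ⟨hy, hOy.symm⟩).mp hcol.symm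
    refine ⟨x, ⟨hx, y, ⟨hy, hOy.symm⟩, hyl, hyx.symm⟩, ?_⟩
    rintro x' ⟨hx', y', hy', hy'l, hx'y'⟩
    obtain rfl := h.eq_of_incident_of_subtendedOvoid_eq hy'.1 hy (hy'.2.trans hOy) hy'l hyl
    exact h.eq_of_mem_subtenders hx' hx hy hx'y'.symm hyx

theorem ncard_eCol_line (h : IsTightSubquadrangle I P' L' s t t' θ) (p : EPoint I P')
    (R : ELine I P' L') (hp : p.1 ∉ R.1) :
    {O : EPoint I P' | O.1 ∈ R.1 ∧ ECol I P' L' p O}.ncard = 0 ∨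
      {O : EPoint I P' | O.1 ∈ R.1 ∧ ECol I P' L' p O}.ncard = θ := by
  obtain ⟨-, l, hl, rfl⟩ := R
  obtain ⟨w, hwP', hwl⟩ := (h.existsUnique_incident_of_notMem h.order_eq h.pos_s hl).exists
  by_cases hw : w ∈ p.1
  · refine .inl ((Set.ncard_eq_zero).mpr (Set.eq_empty_of_forall_notMem ?_))
    exact fun O ⟨hO, hcol⟩ => h.not_eCol_of_base_mem hwl hw hp hO hcol
  · exact .inr (h.ncard_eCol_of_base_notMem hl hwP' hwl hw hp)

theorem ncard_external_common_neighbors (h : IsTightSubquadrangle I P' L' s t t' θ)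
    {p q : EPoint I P'} (hpq : ¬ ECol I P' L' p q) {x y : P} (hx : x ∈ subtenders I P' p.1)
    (hy : y ∈ subtenders I P' q.1) :
    {z | z ∉ P' ∧ Collinear I x z ∧ Collinear I y z}.ncard = t - t' := by
  have hnone : ∀ z ∈ subtenders I P' (subtendedOvoid I P' x), ¬ Collinear I y z :=
    fun z hz hyz => hpq ((h.eCol_iff hy).mpr ⟨z, hx.2 ▸ hz, hyz⟩).symm
  have hsub : subtendedOvoid I P' x ∩ subtendedOvoid I P' y ⊆
      {z | Collinear I x z ∧ Collinear I y z} := fun z hz => ⟨hz.1.2, hz.2.2⟩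
  have hcommon := h.gq.ncard_common_neighbors h.order
    fun hcol => hnone x (self_mem_subtenders hx.1) hcol.symm
  rw [← Nat.add_sub_add_right t 1 t', ← hcommon, ← h.ncard_inter_subtendedOvoid hx.1 hnone,
    ← Set.ncard_sdiff hsub]
  congr 1
  ext z
  exact ⟨fun ⟨hz, hcol⟩ => ⟨hcol, fun hzO => hz hzO.1.1⟩,
    fun ⟨hcol, hzO⟩ => ⟨fun hz => hzO ⟨⟨hz, hcol.1⟩, hz, hcol.2⟩, hcol⟩⟩

theorem ncard_common_eCol (h : IsTightSubquadrangle I P' L' s t t' θ) {p q : EPoint I P'}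
    (hpq : ¬ ECol I P' L' p q) :
    {r : EPoint I P' | ECol I P' L' p r ∧ ECol I P' L' q r}.ncard = θ * (t - t') := by
  obtain ⟨x, hx⟩ := exists_mem_subtenders p
  rw [← h.ncard_subtenders q]
  refine ncard_eq_ncard_mul_of_existsUnique
    (fun r y => ∃ z ∈ subtenders I P' r.1, Collinear I x z ∧ Collinear I y z) ?_ ?_
  · rintro r ⟨hpr, hqr⟩
    obtain ⟨z, hz, hxz⟩ := (h.eCol_iff hx).mp hpr
    obtain ⟨y, hy, hzy⟩ := (h.eCol_iff hz).mp hqr.symm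
    refine ⟨y, ⟨hy, z, hz, hxz, hzy.symm⟩, ?_⟩
    rintro y' ⟨hy', z', hz', hxz', hy'z'⟩
    obtain rfl := h.eq_of_mem_subtenders hz hz' hx.1 hxz hxz'
    exact h.eq_of_mem_subtenders hy' hy hz.1 hy'z'.symm hzy
  · intro y hy
    rw [← h.ncard_external_common_neighbors hpq hx hy, ← mul_one (Set.ncard _)]
    symm
    refine ncard_eq_ncard_mul_of_existsUnique (fun z r => z ∈ subtenders I P' r.1) ?_ ?_
    · rintro z ⟨hz, hxz, hyz⟩
      have hzz := self_mem_subtenders (I := I) hz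
      exact ⟨piPoint I P' ⟨z, hz⟩, ⟨⟨⟨(h.eCol_iff hx).mpr ⟨z, hzz, hxz⟩,
        (h.eCol_iff hy).mpr ⟨z, hzz, hyz⟩⟩, z, hzz, hxz, hyz⟩, hzz⟩,
        fun r hr => Subtype.ext hr.2.2.symm⟩
    · rintro r ⟨-, z, hz, hxz, hyz⟩
      refine ncard_eq_one_of_existsUnique ⟨z, ⟨⟨hz.1, hxz, hyz⟩, hz⟩, ?_⟩
      exact fun z' ⟨⟨_, hxz', _⟩, hz'⟩ => h.eq_of_mem_subtenders hz' hz hx.1 hxz' hxz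

end IsTightSubquadrangle

theorem IsGQ.nonempty_of_allThetaSubtended [Finite P] [Finite L] {I : P → L → Prop} {P' : Set P}
    {s t θ : ℕ} (hGQ : IsGQ I) (hOrd : HasOrder I s t) (hs : 0 < s) (hθt : (θ - 1) * t = s ^ 2)
    (hθsub : AllThetaSubtended I P' θ) (hP : Nonempty P) : P'.Nonempty := by
  by_contra hempty
  obtain rfl := Set.not_nonempty_iff_eq_empty.mp hempty
  obtain ⟨x⟩ := hP
  obtain ⟨l, -⟩ : {l | I x l}.Nonempty := Set.nonempty_of_ncard_ne_zero (by rw [hOrd.2]; lia)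
  have hθ : θ = (s + 1) * (s * t + 1) := by
    rw [← hGQ.card_points hOrd l, ← hθsub x (Set.notMem_empty x), ← Set.ncard_univ]
    congr 1
    ext y
    simp [subtendedOvoid]
  have ht : 0 < t := Nat.pos_of_ne_zero fun h0 => (pow_pos hs 2).ne (by rw [← hθt, h0, mul_zero])
  have hlt : s ^ 2 < (θ - 1) * t := calc
    s ^ 2 ≤ s ^ 2 * t := Nat.le_mul_of_pos_right _ ht
    _ < s ^ 2 * t + (s * t + s) := Nat.lt_add_of_pos_right (by positivity)
    _ = θ - 1 := by
      rw [hθ]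
      exact (Nat.sub_eq_of_eq_add (by ring)).symm
    _ ≤ (θ - 1) * t := Nat.le_mul_of_pos_right _ ht
  exact hlt.ne' hθt

theorem nonempty_points_of_proper {I : P → L → Prop} {P' : Set P} {L' : Set L} {s t : ℕ}
    (hOrd : HasOrder I s t) (hProper : P' ≠ Set.univ ∨ L' ≠ Set.univ) : Nonempty P := by
  obtain hP' | hL' := hProper
  · obtain ⟨x, -⟩ := (Set.ne_univ_iff_exists_notMem P').mp hP'
    exact ⟨x⟩
  · obtain ⟨l, -⟩ := (Set.ne_univ_iff_exists_notMem L').mp hL'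
    obtain ⟨x, -⟩ : {x | I x l}.Nonempty := Set.nonempty_of_ncard_ne_zero (by rw [hOrd.1]; lia)
    exact ⟨x⟩

/-- `E` is a semipartial geometry with parameters
`s* = s − 1`, `t* = t`, `α* = θ`, `μ* = θ(t − t')`. -/
theorem statement14 {P L : Type} [Finite P] [Finite L]
    (I : P → L → Prop) (P' : Set P) (L' : Set L) (s t t' θ : ℕ)
    (hGQ : IsGQ I) (hOrd : HasOrder I s t) (hs : 2 ≤ s)
    (hSubGQ : IsGQ (SubIncid I P' L'))
    (hSubOrd : HasOrder (SubIncid I P' L') s t')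
    (hFull : IsFull I P' L')
    (hProper : P' ≠ Set.univ ∨ L' ≠ Set.univ)
    (ht' : t' ≠ 1) (htst : t = s * t') (hθt : (θ - 1) * t = s ^ 2) (hθ : 1 < θ)
    (hθsub : AllThetaSubtended I P' θ) :
    (∀ R : ELine I P' L', {O : EPoint I P' | O.1 ∈ R.1}.ncard = s) ∧
    (∀ O : EPoint I P', {R : ELine I P' L' | O.1 ∈ R.1}.ncard = t + 1) ∧
    (∀ O O' : EPoint I P', O ≠ O' → ∀ R R' : ELine I P' L',
      O.1 ∈ R.1 → O'.1 ∈ R.1 → O.1 ∈ R'.1 → O'.1 ∈ R'.1 → R = R') ∧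
    (∀ (p : EPoint I P') (R : ELine I P' L'), p.1 ∉ R.1 →
      {O : EPoint I P' | O.1 ∈ R.1 ∧ ECol I P' L' p O}.ncard = 0 ∨
      {O : EPoint I P' | O.1 ∈ R.1 ∧ ECol I P' L' p O}.ncard = θ) ∧
    (∀ p q : EPoint I P', ¬ ECol I P' L' p q →
      {r : EPoint I P' | ECol I P' L' p r ∧ ECol I P' L' q r}.ncard = θ * (t - t')) := by
  have hne := hGQ.nonempty_of_allThetaSubtended hOrd (by lia) hθt hθsub
    (nonempty_points_of_proper hOrd hProper)
  have h : IsTightSubquadrangle I P' L' s t t' θ :=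
    { gq := hGQ, order := hOrd, subGQ := hSubGQ, subOrder := hSubOrd, full := hFull,
      nonempty := hne, two_le := hs, order_eq := htst, tight := hθt, theta_subtended := hθsub }
  exact ⟨h.ncard_points_of_line, h.ncard_lines_of_point,
    fun _ _ hne _ _ => h.line_eq_of_mem hne, h.ncard_eCol_line, fun _ _ => h.ncard_common_eCol⟩

end GQpaper
end
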